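/- arXiv:1805.09602 — 3 statements merged into one kernel-verified Lean document; each statement's English description precedes it below -/
import Mathlib

section
/- ∑_{j∈J^imm} α_j ≤ F^O + (1/ε)·∑_{j∈J} w_j·p_j, where F^O is the optimal total fractional weighted flow-time for the instance J. -/
/-!
The bound holds for any set of rejected jobs; the bucket rules play no role.

For a threshold `d > 0` keep only the jobs of density at least `d` and look at volumes. The cross
terms of `α_j` are `p_j · p_i(r_j) · min ρ_j ρ_i`, so they are at most the integral over `d > 0` of
`1[d ≤ ρ_j] · p_j · a_d(r_j)`, where `a_d(t)` is the volume above `d` that is active in the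
algorithm; likewise the fractional flow time of the offline schedule is the integral of
`∑ t, o_d(t)`, where `o_d(t)` is its volume above `d`. It is therefore enough to compare
`a = a_d` and `o = o_d` for fixed `d` (lemma `threshold`) and to integrate (lemma `integrated`).

For fixed `d`, the potential `a² / 2 - a · o` decreases by `p_j · a` when a rejected job `j` arrives,
does not increase when another job arrives, and increases by at most `o` in a slot, except in
an inversion: a slot that the algorithm gives to a job `j` of density below `d` although `a > 0`.
Such a slot is charged `max 0 (a - o)`, and only if the offline schedule works above `d` in it
(lemma `potential`).

The inversions caused by `j` lie in its first uninterrupted run (lemma `chg_job`). When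
this run starts, `a = 0`, and the weight released from then until the last inversion is at most
`w_j / ε`, as `j` is not yet preemptible there, so that the volume released above `d` is at most `w_j / (ε d)`. Counting slots (lemma `window`) bounds the total charge
of `j` by `m² / 2` with `m = min p_j (w_j / (ε d))`. Since `∫ m² / 2` over `d > 0` equals
`p_j w_j / ε`, the non-rejected jobs pay for all inversions out of the second term of the bound,
while a rejected job pays for its own term `w_j p_j / 2`, because `ε ≤ 2`.
-/

open Finset
open scoped Classical

noncomputable section

namespace NPSched

/-- The density `ρ_j = w_j / p_j` of job `j`. -/
def den (p : ℕ → ℕ) (w : ℕ → ℝ) (j : ℕ) : ℝ := w j / p j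

/-- The density class `⌊ρ_j⌋₂` of job `j`: the largest integer `i` with `2 ^ i ≤ ρ_j`. -/
def cls (p : ℕ → ℕ) (w : ℕ → ℝ) (j : ℕ) : ℤ := Int.log 2 (den p w j)

/-- Remaining size `p_j(t)` of job `j` at integer time `t` under schedule `sched`,
where `sched t` is the job (if any) processed during the slot `[t, t+1]`. -/
def rem (p : ℕ → ℕ) (sched : ℕ → Option ℕ) (j t : ℕ) : ℕ :=
  p j - ((Finset.range t).filter fun t' => sched t' = some j).card

/-- Remaining weight `w_j(t) = ρ_j · p_j(t)`. -/
def wrem (p : ℕ → ℕ) (w : ℕ → ℝ) (sched : ℕ → Option ℕ) (j t : ℕ) : ℝ :=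
  den p w j * rem p sched j t

/-- Fractional weighted flow time `∑_{t ≥ r_j} w_j(t)` of job `j`. -/
def fracFlow (r p : ℕ → ℕ) (w : ℕ → ℝ) (sched : ℕ → Option ℕ) (j : ℕ) : ℝ :=
  ∑' t : ℕ, if r j ≤ t then wrem p w sched j t else 0

/-- `s` is the first time at which job `j` is ever processed. -/
def isStart (sched : ℕ → Option ℕ) (j s : ℕ) : Prop :=
  sched s = some j ∧ ∀ s' < s, sched s' ≠ some j

/-- Active jobs `A(t)`: released by `t`, not immediately rejected, not yet finished. -/
def activeAt (J : Finset ℕ) (r p : ℕ → ℕ) (sched : ℕ → Option ℕ) (Jimm : Finset ℕ)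
    (t : ℕ) : Finset ℕ :=
  J.filter fun j => r j ≤ t ∧ j ∉ Jimm ∧ 0 < rem p sched j t

/-- The set `A(r_j)` of active jobs present when `j` arrives: jobs released strictly
earlier, or simultaneously but earlier in the fixed (index) order, that are neither
rejected nor finished.  (`j` itself is excluded.) -/
def arrSet (J : Finset ℕ) (r p : ℕ → ℕ) (sched : ℕ → Option ℕ) (Jimm : Finset ℕ)
    (j : ℕ) : Finset ℕ :=
  J.filter fun j' =>
    (r j' < r j ∨ (r j' = r j ∧ j' < j)) ∧ j' ∉ Jimm ∧ 0 < rem p sched j' (r j)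

/-- `α_j`: the increase of total fractional weighted flow time caused by the arrival
of `j`, had HDF been run on `A(r_j) ∪ {j}` from time `r_j` on. -/
def alpha (J : Finset ℕ) (r p : ℕ → ℕ) (w : ℕ → ℝ) (sched : ℕ → Option ℕ)
    (Jimm : Finset ℕ) (j : ℕ) : ℝ :=
  w j * ∑ j' ∈ (arrSet J r p sched Jimm j).filter (fun j' => den p w j ≤ den p w j'),
      (rem p sched j' (r j) : ℝ)
    + w j * p j / 2
    + p j * ∑ j' ∈ (arrSet J r p sched Jimm j).filter (fun j' => den p w j' < den p w j),
        wrem p w sched j' (r j)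

/-- `α_j⁺`: the part of (the two sums of) `α_j` coming from jobs of density class
at least `⌊ρ_j⌋₂`. -/
def alphaPlus (J : Finset ℕ) (r p : ℕ → ℕ) (w : ℕ → ℝ) (sched : ℕ → Option ℕ)
    (Jimm : Finset ℕ) (j : ℕ) : ℝ :=
  w j * ∑ j' ∈ (arrSet J r p sched Jimm j).filter
      (fun j' => cls p w j ≤ cls p w j' ∧ den p w j ≤ den p w j'),
      (rem p sched j' (r j) : ℝ)
    + p j * ∑ j' ∈ (arrSet J r p sched Jimm j).filter
        (fun j' => cls p w j ≤ cls p w j' ∧ den p w j' < den p w j),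
        wrem p w sched j' (r j)

/-- `α_j⁻`: the contribution to `α_j` of jobs of density class strictly less
than `⌊ρ_j⌋₂`. -/
def alphaMinus (J : Finset ℕ) (r p : ℕ → ℕ) (w : ℕ → ℝ) (sched : ℕ → Option ℕ)
    (Jimm : Finset ℕ) (j : ℕ) : ℝ :=
  p j * ∑ j' ∈ (arrSet J r p sched Jimm j).filter (fun j' => cls p w j' < cls p w j),
      wrem p w sched j' (r j)

/-- The set `J⁺` of jobs assigned to table `T⁺`. -/
def Jplus (J : Finset ℕ) (r p : ℕ → ℕ) (w : ℕ → ℝ) (sched : ℕ → Option ℕ)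
    (Jimm : Finset ℕ) (ε : ℝ) : Finset ℕ :=
  J.filter fun j => w j * p j / ε ≤ alphaPlus J r p w sched Jimm j

/-- The set `J⁻` of jobs assigned to table `T⁻`. -/
def Jminus (J : Finset ℕ) (r p : ℕ → ℕ) (w : ℕ → ℝ) (sched : ℕ → Option ℕ)
    (Jimm : Finset ℕ) (ε : ℝ) : Finset ℕ :=
  J.filter fun j => w j * p j / ε < alphaMinus J r p w sched Jimm j

/-- The bucket `(⌊α_j⁺/w_j⌋₂, ⌊w_j⌋₂)` of table `T⁺` to which a job of `J⁺` is assigned. -/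
def bucketPlus (J : Finset ℕ) (r p : ℕ → ℕ) (w : ℕ → ℝ) (sched : ℕ → Option ℕ)
    (Jimm : Finset ℕ) (j : ℕ) : ℤ × ℤ :=
  (Int.log 2 (alphaPlus J r p w sched Jimm j / w j), Int.log 2 (w j))

/-- The bucket `(⌊α_j⁻⌋₂, ⌊ρ_j⌋₂, ⌊p_j⌋₂)` of table `T⁻` to which a job of `J⁻` is assigned. -/
def bucketMinus (J : Finset ℕ) (r p : ℕ → ℕ) (w : ℕ → ℝ) (sched : ℕ → Option ℕ)
    (Jimm : Finset ℕ) (j : ℕ) : ℤ × ℤ × ℤ :=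
  (Int.log 2 (alphaMinus J r p w sched Jimm j), cls p w j, Int.log 2 ((p j : ℝ)))

/-- `j'` arrives no later than `j` (simultaneous arrivals ordered by index). -/
def arrLE (r : ℕ → ℕ) (j' j : ℕ) : Prop :=
  r j' < r j ∨ (r j' = r j ∧ j' ≤ j)

/-- The (1-based) position of `j` in the arrival order of its bucket of `T⁺`. -/
def rankPlus (J : Finset ℕ) (r p : ℕ → ℕ) (w : ℕ → ℝ) (sched : ℕ → Option ℕ)
    (Jimm : Finset ℕ) (ε : ℝ) (j : ℕ) : ℕ :=
  ((Jplus J r p w sched Jimm ε).filter fun j' =>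
    bucketPlus J r p w sched Jimm j' = bucketPlus J r p w sched Jimm j ∧ arrLE r j' j).card

/-- The (1-based) position of `j` in the arrival order of its bucket of `T⁻`. -/
def rankMinus (J : Finset ℕ) (r p : ℕ → ℕ) (w : ℕ → ℝ) (sched : ℕ → Option ℕ)
    (Jimm : Finset ℕ) (ε : ℝ) (j : ℕ) : ℕ :=
  ((Jminus J r p w sched Jimm ε).filter fun j' =>
    bucketMinus J r p w sched Jimm j' = bucketMinus J r p w sched Jimm j ∧ arrLE r j' j).card

/-- An execution of algorithm `A` on a job instance `(J, r, p, w)` with parameter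
`ε` (where `k = 1/ε` is a positive integer): the data consists of the schedule
(`sched t` is the job processed in slot `[t, t+1]`), the set `Jimm` of immediately
rejected jobs, and the growing set `L t` of preemptible jobs; the fields below
axiomatise exactly the rules of algorithm `A`. -/
structure AlgA where
  /-- the (finite) set of jobs -/
  J : Finset ℕ
  /-- release times -/
  r : ℕ → ℕ
  /-- sizes -/
  p : ℕ → ℕ
  /-- weights -/
  w : ℕ → ℝ
  /-- the parameter ε -/
  ε : ℝ
  /-- `k = 1/ε`, a positive integer -/
  k : ℕ
  /-- the schedule produced by algorithm `A` -/
  sched : ℕ → Option ℕ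
  /-- the set `J^imm` of immediately rejected jobs -/
  Jimm : Finset ℕ
  /-- `L t` : the set of preemptible jobs at time `t` -/
  L : ℕ → Finset ℕ
  hp : ∀ j ∈ J, 0 < p j
  hw : ∀ j ∈ J, 0 < w j
  hε : 0 < ε
  hε2 : ε ^ 2 ≤ 1 / 2
  hk : (k : ℝ) = 1 / ε
  /-- immediate rejections: in each bucket of `T⁺` the first job and every
  `(1/ε)`-th job thereafter (positions `1, 1 + k, 1 + 2k, …`), and in each bucket
  of `T⁻` every `(1/ε)`-th job (positions `k, 2k, …`), are rejected on arrival. -/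
  hJimm : ∀ j, j ∈ Jimm ↔ j ∈ J ∧
    ((j ∈ Jplus J r p w sched Jimm ε ∧ rankPlus J r p w sched Jimm ε j % k = 1 % k) ∨
     (j ∈ Jminus J r p w sched Jimm ε ∧ rankMinus J r p w sched Jimm ε j % k = 0))
  hL0 : L 0 = ∅
  /-- a job enters `L` when the weight released since it started processing
  exceeds `w_j / ε`; once in `L` it stays in `L`. -/
  hLsucc : ∀ t j, j ∈ L (t + 1) ↔ j ∈ L t ∨
    (sched t = some j ∧ ∃ s, isStart sched j s ∧
      w j / ε < ∑ j' ∈ J.filter (fun j' => s < r j' ∧ r j' ≤ t + 1), w j')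
  /-- only active jobs are processed -/
  hvalid : ∀ t j, sched t = some j → j ∈ activeAt J r p sched Jimm t
  /-- a running job that is unfinished and not preemptible keeps running -/
  hcont : ∀ t j, sched t = some j → 0 < rem p sched j (t + 1) → j ∉ L (t + 1) →
    sched (t + 1) = some j
  /-- initially, a highest-density active job is processed (if any job is active) -/
  hHDF0 : (activeAt J r p sched Jimm 0 = ∅ ∧ sched 0 = none) ∨
    ∃ j, sched 0 = some j ∧ ∀ j' ∈ activeAt J r p sched Jimm 0, den p w j' ≤ den p w j
  /-- whenever the previous job has finished or become preemptible (or no job was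
  running), a highest-density active job is processed (if any job is active) -/
  hHDFsucc : ∀ t, (∀ j, sched t = some j → rem p sched j (t + 1) = 0 ∨ j ∈ L (t + 1)) →
    (activeAt J r p sched Jimm (t + 1) = ∅ ∧ sched (t + 1) = none) ∨
    ∃ j, sched (t + 1) = some j ∧
      ∀ j' ∈ activeAt J r p sched Jimm (t + 1), den p w j' ≤ den p w j
  /-- every job that is not immediately rejected is eventually finished by `A` -/
  hdone : ∀ j ∈ J, j ∉ Jimm → ∃ T, rem p sched j T = 0



/-- A valid (preemptive) offline schedule for the instance `(J, r, p)`: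
it only processes released, unfinished jobs of `J`, and completes every job of `J`. -/
def OffValid (J : Finset ℕ) (r p : ℕ → ℕ) (osched : ℕ → Option ℕ) : Prop :=
  (∀ t j, osched t = some j → j ∈ J ∧ r j ≤ t ∧ 0 < rem p osched j t) ∧
  ∀ j ∈ J, ∃ T, rem p osched j T = 0

/-- The step function `1[d ≤ x]`, seen as a function of the threshold `d`. -/
def ind (x d : ℝ) : ℝ := if d ≤ x then 1 else 0

/-- Remaining volume at time `t` of the released jobs of `S` whose density is at least `d`. -/
def vol (S : Finset ℕ) (r p : ℕ → ℕ) (w : ℕ → ℝ) (sched : ℕ → Option ℕ) (d : ℝ) (t : ℕ) : ℝ :=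
  ∑ j ∈ S, if r j ≤ t ∧ d ≤ den p w j then (rem p sched j t : ℝ) else 0

/-- Volume released exactly at time `t` by the jobs of `S` whose density is at least `d`. -/
def arr (S : Finset ℕ) (r p : ℕ → ℕ) (w : ℕ → ℝ) (d : ℝ) (t : ℕ) : ℝ :=
  ∑ j ∈ S, if r j = t ∧ d ≤ den p w j then (p j : ℝ) else 0

/-- Volume processed in slot `[t, t+1]` (zero or one) on jobs of density at least `d`. -/
def proc (p : ℕ → ℕ) (w : ℕ → ℝ) (sched : ℕ → Option ℕ) (d : ℝ) (t : ℕ) : ℝ :=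
  if ∃ j, sched t = some j ∧ d ≤ den p w j then 1 else 0

/-! ### Volume dynamics of a schedule -/

lemma rem_succ (p : ℕ → ℕ) (sched : ℕ → Option ℕ) (j t : ℕ) :
    rem p sched j (t + 1) = rem p sched j t - (if sched t = some j then 1 else 0) := by
  unfold rem
  rw [Finset.range_add_one, Finset.filter_insert]
  split_ifs with h
  · rw [Finset.card_insert_of_notMem (by simp)]; omega
  · omega

lemma rem_anti (p : ℕ → ℕ) (sched : ℕ → Option ℕ) (j : ℕ) : Antitone (rem p sched j) := by
  refine antitone_nat_of_succ_le fun t => ?_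
  rw [rem_succ]; omega

lemma rem_before (r p : ℕ → ℕ) (sched : ℕ → Option ℕ)
    (hv : ∀ t j, sched t = some j → r j ≤ t) (j t : ℕ) (ht : t ≤ r j) :
    rem p sched j t = p j := by
  unfold rem
  rw [Finset.filter_eq_empty_iff.2]
  · simp
  · intro t' ht' h
    have := hv _ _ h
    simp at ht'; omega

lemma vol_nonneg (S : Finset ℕ) (r p : ℕ → ℕ) (w : ℕ → ℝ) (sched : ℕ → Option ℕ) (d : ℝ) (t : ℕ) :
    0 ≤ vol S r p w sched d t :=
  Finset.sum_nonneg fun j _ => by split_ifs <;> positivity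

lemma vol_natCast (S : Finset ℕ) (r p : ℕ → ℕ) (w : ℕ → ℝ) (sched : ℕ → Option ℕ) (d : ℝ) (t : ℕ) :
    ∃ n : ℕ, vol S r p w sched d t = n :=
  ⟨∑ j ∈ S, if r j ≤ t ∧ d ≤ den p w j then rem p sched j t else 0, by unfold vol; push_cast; rfl⟩

/-- Volumes are integers, so unequal ones differ by at least one. -/
lemma vol_gap (S S' : Finset ℕ) (r p : ℕ → ℕ) (w : ℕ → ℝ) (sched sched' : ℕ → Option ℕ) (d : ℝ)
    (t : ℕ) (h : vol S r p w sched d t < vol S' r p w sched' d t) :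
    vol S r p w sched d t + 1 ≤ vol S' r p w sched' d t := by
  obtain ⟨m, hm⟩ := vol_natCast S r p w sched d t
  obtain ⟨n, hn⟩ := vol_natCast S' r p w sched' d t
  rw [hm, hn] at h ⊢
  have h' : m < n := by exact_mod_cast h
  exact_mod_cast Nat.succ_le_of_lt h'

lemma arr_nonneg (S : Finset ℕ) (r p : ℕ → ℕ) (w : ℕ → ℝ) (d : ℝ) (t : ℕ) :
    0 ≤ arr S r p w d t :=
  Finset.sum_nonneg fun j _ => by split_ifs <;> positivity

lemma proc_cases (p : ℕ → ℕ) (w : ℕ → ℝ) (sched : ℕ → Option ℕ) (d : ℝ) (t : ℕ) :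
    proc p w sched d t = 0 ∨ proc p w sched d t = 1 := by
  unfold proc; split_ifs <;> simp

section
variable {S : Finset ℕ} {r p : ℕ → ℕ} (w : ℕ → ℝ) {sched : ℕ → Option ℕ} (d : ℝ)

lemma proc_eq_sum (hv : ∀ t j, sched t = some j → j ∈ S ∧ r j ≤ t ∧ 0 < rem p sched j t) (t : ℕ) :
    proc p w sched d t =
      ∑ j ∈ S, if sched t = some j ∧ d ≤ den p w j then (1 : ℝ) else 0 := by
  unfold proc
  cases h : sched t with
  | none => simp
  | some i =>
    have hi := (hv t i h).1
    rw [Finset.sum_eq_single_of_mem i hi]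
    · simp
    · intro b _ hb
      simp [hb.symm]

lemma proc_le_vol (hv : ∀ t j, sched t = some j → j ∈ S ∧ r j ≤ t ∧ 0 < rem p sched j t) (t : ℕ) :
    proc p w sched d t ≤ vol S r p w sched d t := by
  rw [proc_eq_sum w d hv]
  refine Finset.sum_le_sum fun j _ => ?_
  by_cases h : sched t = some j ∧ d ≤ den p w j
  · obtain ⟨_, h2, h3⟩ := hv t j h.1
    rw [if_pos h, if_pos ⟨h2, h.2⟩]
    exact_mod_cast h3
  · rw [if_neg h]; split_ifs <;> positivity

lemma vol_succ (hv : ∀ t j, sched t = some j → j ∈ S ∧ r j ≤ t ∧ 0 < rem p sched j t) (t : ℕ) :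
    vol S r p w sched d (t + 1) =
      vol S r p w sched d t - proc p w sched d t + arr S r p w d (t + 1) := by
  rw [proc_eq_sum w d hv]
  unfold vol arr
  rw [← Finset.sum_sub_distrib, ← Finset.sum_add_distrib]
  refine Finset.sum_congr rfl fun j _ => ?_
  by_cases hd : d ≤ den p w j
  · simp only [hd, and_true]
    rcases lt_trichotomy (r j) (t + 1) with h | h | h
    · have h1 : r j ≤ t := by omega
      have h2 : r j ≤ t + 1 := by omega
      have h3 : r j ≠ t + 1 := by omega
      simp only [h1, h2, h3, if_true, if_false, rem_succ]
      split_ifs with h4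
      · have := (hv t j h4).2.2
        rw [Nat.cast_sub (by omega)]; simp
      · simp
    · have h1 : ¬ r j ≤ t := by omega
      have h4 : sched t ≠ some j := fun h4 => h1 (hv t j h4).2.1
      simp only [h, le_refl, if_true, if_false, h4]
      rw [rem_before r p sched (fun t j h => (hv t j h).2.1) j (t + 1) h.ge]; simp
    · have h1 : ¬ r j ≤ t := by omega
      have h2 : ¬ r j ≤ t + 1 := by omega
      have h3 : r j ≠ t + 1 := by omega
      have h4 : sched t ≠ some j := fun h4 => h1 (hv t j h4).2.1
      simp [h1, h2, h3, h4]
  · simp [hd]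

lemma vol_zero (hv : ∀ t j, sched t = some j → j ∈ S ∧ r j ≤ t ∧ 0 < rem p sched j t) :
    vol S r p w sched d 0 = arr S r p w d 0 := by
  unfold vol arr
  refine Finset.sum_congr rfl fun j _ => ?_
  rw [rem_before r p sched (fun t j h => (hv t j h).2.1) j 0 (Nat.zero_le _)]
  simp

end

/-! ### Two lemmas on sequences -/

/-- Amortisation with the potential `a² / 2 - a * o`: `a` and `o` are two workloads fed by a common
arrival stream `u`, with `o` fed moreover by `z`; they are drained at rates `x, y ∈ {0, 1}`, and `c`
pays for the slots in which only `o` is drained. -/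
lemma potential (a o u z x y c : ℕ → ℝ)
    (ha0 : a 0 = u 0) (ho0 : o 0 = u 0 + z 0)
    (ha : ∀ t, a (t + 1) = a t - x t + u (t + 1))
    (ho : ∀ t, o (t + 1) = o t - y t + (u (t + 1) + z (t + 1)))
    (hx : ∀ t, x t = 0 ∨ x t = 1) (hy : ∀ t, y t = 0 ∨ y t = 1)
    (hxa : ∀ t, x t ≤ a t) (hyo : ∀ t, y t ≤ o t) (hu : ∀ t, 0 ≤ u t)
    (hc0 : ∀ t, 0 ≤ c t) (hc : ∀ t, x t = 0 → y t = 1 → a t - o t ≤ c t) (T : ℕ) :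
    ∑ t ∈ range (T + 1), z t * a t + (a T ^ 2 / 2 - a T * o T) ≤
      ∑ t ∈ range T, (o t + c t) := by
  induction T with
  | zero =>
    simp only [zero_add, sum_range_one, range_zero, sum_empty, ha0, ho0]
    nlinarith [sq_nonneg (u 0)]
  | succ T ih =>
    rw [sum_range_succ _ (T + 1), sum_range_succ (fun t => o t + c t), ha T, ho T]
    have hu' := hu (T + 1)
    have hxa' := hxa T
    have hyo' := hyo T
    have hc' := hc0 T
    have hc'' := hc T
    have key : ((a T - x T) ^ 2 / 2 - (a T - x T) * (o T - y T)) ≤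
        (a T ^ 2 / 2 - a T * o T) + o T + c T := by
      rcases hx T with h1 | h1 <;> rcases hy T with h2 | h2
      · rw [h1, h2]; rw [h2] at hyo'; nlinarith
      · have := hc'' h1 h2
        rw [h1, h2]; nlinarith
      · rw [h1, h2]; rw [h1] at hxa'; nlinarith
      · rw [h1, h2]; nlinarith
    have h3 : 0 ≤ u (T + 1) * (o T - y T) := mul_nonneg hu' (by linarith)
    nlinarith [sq_nonneg (u (T + 1))]

/-- Total charge of one window in which `a` is never drained. The witness `n` counts the slots with
`o i ≤ a i` in which `o` is drained; it bounds `a - o`, the number of slots, and, through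
`n + o ≤ released volume`, the volume released in the window. Integrality enters as `hgap`: a
negative `a - o` is at most `-1`, so that draining `o` by one does not make it positive. -/
lemma window (a o u z y : ℕ → ℝ) (ha0 : a 0 = 0) (N : ℕ)
    (ha : ∀ i < N, a (i + 1) = a i + u i)
    (ho : ∀ i < N, o (i + 1) = o i - y i + (u i + z i))
    (hy : ∀ i, y i = 0 ∨ y i = 1) (hyo : ∀ i, y i ≤ o i)
    (hz : ∀ i, 0 ≤ z i) (hgap : ∀ i, a i < o i → a i + 1 ≤ o i) :
    ∃ n : ℕ, ∑ i ∈ range N, (if y i = 1 then max 0 (a i - o i) else 0) ≤ (n : ℝ) ^ 2 / 2 ∧ n ≤ N ∧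
      (n = 0 ∨ n + o N ≤ ∑ i ∈ range N, (u i + z i)) := by
  have ho0 : ∀ i, 0 ≤ o i := fun i => by
    rcases hy i with h | h <;> linarith [hyo i]
  have main : ∀ M ≤ N, ∃ n : ℕ, ∑ i ∈ range M, (if y i = 1 then max 0 (a i - o i) else 0) ≤
      (n : ℝ) * (n - 1) / 2 ∧ n ≤ M ∧ a M - o M ≤ n ∧ a M ≤ ∑ i ∈ range M, (u i + z i) ∧
      (n = 0 ∨ n + o M ≤ ∑ i ∈ range M, (u i + z i)) := by
    intro M
    induction M with
    | zero => exact fun _ => ⟨0, by simp, le_rfl, by simpa [ha0] using ho0 0, by simp [ha0], .inl rfl⟩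
    | succ M ih =>
      intro hM
      obtain ⟨n, h1, h2, h3, h4, h5⟩ := ih (by omega)
      have e1 := ha M (by omega)
      have e2 := ho M (by omega)
      have e3 := hz M
      rw [sum_range_succ, sum_range_succ]
      rcases hy M with h | h
      · refine ⟨n, ?_, by omega, ?_, by linarith, ?_⟩
        · simpa [h] using h1
        · linarith
        · exact h5.imp id fun h5 => by linarith
      · rw [if_pos h]
        by_cases hD : o M ≤ a M
        · refine ⟨n + 1, ?_, by omega, ?_, by linarith, .inr ?_⟩
          · rw [max_eq_right (by linarith)]; push_cast; nlinarith
          · push_cast; linarith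
          · push_cast
            rcases h5 with h5 | h5
            · subst h5; push_cast; linarith
            · linarith
        · push Not at hD
          refine ⟨n, ?_, by omega, ?_, by linarith, ?_⟩
          · rw [max_eq_left (by linarith)]; linarith
          · have : (0 : ℝ) ≤ n := by positivity
            linarith [hgap M hD]
          · exact h5.imp id fun h5 => by linarith
  obtain ⟨n, h1, h2, -, -, h5⟩ := main N le_rfl
  have : (0 : ℝ) ≤ n := by positivity
  exact ⟨n, by nlinarith, h2, h5⟩

/-! ### Inversions of the algorithm -/

lemma alg_valid (A : AlgA) (t j : ℕ) (h : A.sched t = some j) :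
    j ∈ A.J \ A.Jimm ∧ A.r j ≤ t ∧ 0 < rem A.p A.sched j t := by
  have := A.hvalid t j h
  simp only [activeAt, mem_filter] at this
  exact ⟨mem_sdiff.2 ⟨this.1, this.2.2.1⟩, this.2.1, this.2.2.2⟩

/-- The volume of the non-rejected jobs above threshold `d` in the algorithm. -/
abbrev volA (A : AlgA) (d : ℝ) : ℕ → ℝ := vol (A.J \ A.Jimm) A.r A.p A.w A.sched d

/-- In a slot the algorithm idles for lack of active jobs, picks a job of highest density, or
continues the non-preemptible job of the previous slot. -/
lemma slot_cases (A : AlgA) (t : ℕ) :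
    (activeAt A.J A.r A.p A.sched A.Jimm t = ∅ ∧ A.sched t = none) ∨
    (∃ j, A.sched t = some j ∧
      ∀ j' ∈ activeAt A.J A.r A.p A.sched A.Jimm t, den A.p A.w j' ≤ den A.p A.w j) ∨
    (∃ t' j, t = t' + 1 ∧ A.sched t' = some j ∧ A.sched t = some j ∧ j ∉ A.L t) := by
  cases t with
  | zero => exact A.hHDF0.elim .inl fun h => .inr (.inl h)
  | succ t =>
    by_cases hc : ∀ j, A.sched t = some j → rem A.p A.sched j (t + 1) = 0 ∨ j ∈ A.L (t + 1)
    · exact (A.hHDFsucc t hc).elim .inl fun h => .inr (.inl h)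
    · push Not at hc
      obtain ⟨j, h1, h2, h3⟩ := hc
      exact .inr (.inr ⟨t, j, rfl, h1, A.hcont t j h1 (by omega) h3, h3⟩)

lemma exists_active (A : AlgA) {d : ℝ} {t : ℕ} (h : volA A d t ≠ 0) :
    ∃ j ∈ activeAt A.J A.r A.p A.sched A.Jimm t, d ≤ den A.p A.w j := by
  obtain ⟨j, hj, hne⟩ := Finset.exists_ne_zero_of_sum_ne_zero h
  have hc : A.r j ≤ t ∧ d ≤ den A.p A.w j := by
    by_contra hc; simp [hc] at hne
  rw [if_pos hc] at hne
  rw [mem_sdiff] at hj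
  refine ⟨j, ?_, hc.2⟩
  simp only [activeAt, mem_filter]
  exact ⟨hj.1, hc.1, hj.2, Nat.pos_of_ne_zero (by exact_mod_cast hne)⟩

/-- A job below the threshold can run in the presence of volume above it only by continuing
non-preemptibly. -/
lemma inversion (A : AlgA) {d : ℝ} {t : ℕ} (h : volA A d t ≠ 0)
    (hp : proc A.p A.w A.sched d t = 0) :
    ∃ t' j, t = t' + 1 ∧ A.sched t' = some j ∧ A.sched t = some j ∧ j ∉ A.L t := by
  obtain ⟨i, hi, hid⟩ := exists_active A h
  rcases slot_cases A t with h1 | ⟨j, h1, h2⟩ | h1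
  · rw [h1.1] at hi; simp at hi
  · exfalso
    have : ∃ j, A.sched t = some j ∧ d ≤ den A.p A.w j := ⟨j, h1, hid.trans (h2 i hi)⟩
    simp [proc, this] at hp
  · exact h1

lemma L_mono (A : AlgA) : Monotone A.L :=
  monotone_nat_of_le_succ fun t _ hj => (A.hLsucc t _).2 (.inl hj)

/-- A job that is not yet preemptible at time `t` has been running without interruption. -/
lemma run_contiguous (A : AlgA) {s t j : ℕ} (hs : A.sched s = some j) (ht : A.sched t = some j)
    (hL : j ∉ A.L t) {t' : ℕ} (h1 : s ≤ t') (h2 : t' ≤ t) : A.sched t' = some j := by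
  induction t', h1 using Nat.le_induction with
  | base => exact hs
  | succ m hm ih =>
    refine A.hcont m j (ih (by omega)) ?_ fun h => hL (L_mono A h2 h)
    exact (alg_valid A t j ht).2.2.trans_le (rem_anti _ _ _ h2)

/-- The charge of slot `t`: the excess of the algorithm's volume over the offline one, if only the
offline schedule works above the threshold. -/
def chg (A : AlgA) (osched : ℕ → Option ℕ) (d : ℝ) (t : ℕ) : ℝ :=
  if proc A.p A.w A.sched d t = 0 ∧ proc A.p A.w osched d t = 1 then
    max 0 (volA A d t - vol A.J A.r A.p A.w osched d t) else 0

lemma chg_nonneg (A : AlgA) (osched : ℕ → Option ℕ) (d : ℝ) (t : ℕ) : 0 ≤ chg A osched d t := by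
  unfold chg; split_ifs <;> simp

lemma chg_ne_zero (A : AlgA) (osched : ℕ → Option ℕ) (d : ℝ) (t : ℕ)
    (h : chg A osched d t ≠ 0) : volA A d t ≠ 0 ∧ proc A.p A.w A.sched d t = 0 := by
  unfold chg at h
  split_ifs at h with hc
  · refine ⟨fun h0 => h ?_, hc.1⟩
    rw [h0, max_eq_left]
    linarith [vol_nonneg A.J A.r A.p A.w osched d t]
  · exact absurd rfl h

lemma arr_split (A : AlgA) (d : ℝ) (t : ℕ) : arr A.J A.r A.p A.w d t =
    arr (A.J \ A.Jimm) A.r A.p A.w d t + arr A.Jimm A.r A.p A.w d t := by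
  unfold arr
  rw [Finset.sum_sdiff]
  exact fun j hj => ((A.hJimm j).1 hj).1

lemma arr_window (A : AlgA) {d : ℝ} (s N : ℕ) :
    d * ∑ i ∈ range N, arr A.J A.r A.p A.w d (s + i + 1) ≤
      ∑ j ∈ A.J.filter (fun j => s < A.r j ∧ A.r j ≤ s + N), A.w j := by
  unfold arr
  rw [Finset.sum_comm, Finset.mul_sum, Finset.sum_filter]
  refine Finset.sum_le_sum fun j hj => ?_
  have hp : (0 : ℝ) < A.p j := by exact_mod_cast A.hp j hj
  have hw := A.hw j hj
  by_cases h : (s < A.r j ∧ A.r j ≤ s + N) ∧ d ≤ den A.p A.w j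
  · rw [if_pos h.1, Finset.sum_eq_single (A.r j - s - 1)]
    · rw [if_pos ⟨by omega, h.2⟩]
      have := h.2
      rwa [den, le_div_iff₀ hp] at this
    · intro b _ hb
      rw [if_neg]; rintro ⟨h1, -⟩; omega
    · intro hn
      exfalso; apply hn; rw [mem_range]; omega
  · rw [Finset.sum_eq_zero, mul_zero]
    · split_ifs <;> [exact hw.le; exact le_rfl]
    · intro i hi
      rw [mem_range] at hi
      rw [if_neg]; rintro ⟨h1, h2⟩; exact h ⟨by omega, h2⟩

/-- Total charge of the slots given to job `j`: all of them lie in its first, uninterrupted run,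
before which nothing above the threshold was pending. -/
lemma chg_job (A : AlgA) (osched : ℕ → Option ℕ) (hO : OffValid A.J A.r A.p osched)
    {d : ℝ} (hd : 0 < d) (T j : ℕ) :
    ∑ t ∈ (range T).filter (fun t => A.sched t = some j), chg A osched d t ≤
      (min (A.p j : ℝ) (A.w j / A.ε / d)) ^ 2 / 2 := by
  have hO' := hO.1
  set P := ((range T).filter (fun t => A.sched t = some j)).filter (fun t => chg A osched d t ≠ 0)
    with hP
  rw [← Finset.sum_filter_ne_zero]
  rcases P.eq_empty_or_nonempty with h0 | hne
  · rw [← hP, h0, sum_empty]; positivity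
  -- `t` is the last charged slot of `j`, and `s` its first processing slot
  set t := P.max' hne with ht
  have htP : t ∈ P := P.max'_mem hne
  simp only [hP, mem_filter, mem_range] at htP
  obtain ⟨⟨htT, hst⟩, hct⟩ := htP
  obtain ⟨hv, hp0⟩ := chg_ne_zero A osched d t hct
  obtain ⟨t', j', e1, e2, e3, e4⟩ := inversion A hv hp0
  obtain rfl : j = j' := by rw [hst] at e3; exact Option.some.inj e3
  have hex : ∃ s, A.sched s = some j := ⟨t, hst⟩
  set s := Nat.find hex with hs
  have hss : A.sched s = some j := Nat.find_spec hex
  have hmin : ∀ m < s, A.sched m ≠ some j := fun m hm => Nat.find_min hex hm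
  have hst' : s ≤ t' := Nat.find_min' hex e2
  have hrun : ∀ m, s ≤ m → m ≤ t → A.sched m = some j :=
    fun m h1 h2 => run_contiguous A hss hst e4 h1 h2
  have hlow : ¬ d ≤ den A.p A.w j := by
    intro h
    have : ∃ i, A.sched t = some i ∧ d ≤ den A.p A.w i := ⟨j, hst, h⟩
    simp [proc, this] at hp0
  have hproc : ∀ m, s ≤ m → m ≤ t → proc A.p A.w A.sched d m = 0 := by
    intro m h1 h2
    unfold proc
    rw [if_neg]
    rintro ⟨i, h3, h4⟩
    rw [hrun m h1 h2] at h3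
    obtain rfl := Option.some.inj h3
    exact hlow h4
  have has : volA A d s = 0 := by
    by_contra h
    obtain ⟨m, i, f1, f2, f3, -⟩ := inversion A h (hproc s le_rfl (by omega))
    rw [hss] at f3
    obtain rfl := Option.some.inj f3
    exact hmin m (by omega) f2
  obtain ⟨n, h1, h2, h3⟩ := window (fun i => volA A d (s + i))
    (fun i => vol A.J A.r A.p A.w osched d (s + i))
    (fun i => arr (A.J \ A.Jimm) A.r A.p A.w d (s + i + 1))
    (fun i => arr A.Jimm A.r A.p A.w d (s + i + 1))
    (fun i => proc A.p A.w osched d (s + i)) has (t - s + 1)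
    (fun i hi => by
      have := vol_succ A.w d (alg_valid A) (s + i)
      rw [hproc (s + i) (by omega) (by omega), sub_zero] at this
      exact this)
    (fun i hi => by
      have := vol_succ A.w d hO' (s + i)
      rw [arr_split] at this
      exact this)
    (fun i => proc_cases _ _ _ _ _) (fun i => proc_le_vol _ _ hO' _)
    (fun i => arr_nonneg _ _ _ _ _ _) (fun i => vol_gap _ _ _ _ _ _ _ _ _)
  have hsum : ∑ t ∈ P, chg A osched d t ≤ (n : ℝ) ^ 2 / 2 := by
    refine le_trans ?_ h1
    calc ∑ t ∈ P, chg A osched d t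
        ≤ ∑ m ∈ (range (t - s + 1)).image (fun i => s + i), chg A osched d m := by
          refine Finset.sum_le_sum_of_subset_of_nonneg ?_ fun _ _ _ => chg_nonneg _ _ _ _
          intro m hm
          have hmt : m ≤ t := P.le_max' m hm
          simp only [hP, mem_filter] at hm
          have hsm : s ≤ m := Nat.find_min' hex hm.1.2
          exact mem_image.2 ⟨m - s, by rw [mem_range]; omega, by omega⟩
      _ = ∑ i ∈ range (t - s + 1), chg A osched d (s + i) :=
          Finset.sum_image fun _ _ _ _ h => by simpa using h
      _ ≤ _ := by
          refine Finset.sum_le_sum fun i hi => ?_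
          rw [mem_range] at hi
          unfold chg
          rw [hproc (s + i) (by omega) (by omega)]
          simp
  have hnp : (n : ℝ) ≤ A.p j := by
    have hr := (alg_valid A t j hst).2.2
    have hcard : t - s ≤ ((range t).filter fun t' => A.sched t' = some j).card := by
      calc t - s = (Finset.Ico s t).card := by simp
        _ ≤ _ := Finset.card_le_card fun m hm => by
          rw [Finset.mem_Ico] at hm
          exact mem_filter.2 ⟨mem_range.2 hm.2, hrun m hm.1 hm.2.le⟩
    unfold rem at hr
    have : n ≤ A.p j := by omega
    exact_mod_cast this
  have hwj : 0 < A.w j := A.hw j (mem_sdiff.1 (alg_valid A t j hst).1).1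
  have hε := A.hε
  have hnw : (n : ℝ) ≤ A.w j / A.ε / d := by
    rcases h3 with h3 | h3
    · rw [h3]; push_cast; positivity
    · rw [le_div_iff₀ hd]
      -- the jobs released at the end of the last slot are still untouched in the offline schedule
      have hlast := vol_succ A.w d hO' t
      have hge := proc_le_vol A.w d hO' t
      rw [Finset.sum_range_succ] at h3
      simp only [show s + (t - s + 1) = t + 1 by omega, show s + (t - s) + 1 = t + 1 by omega,
        ← arr_split] at h3
      have hn : (n : ℝ) ≤ ∑ i ∈ range (t - s), arr A.J A.r A.p A.w d (s + i + 1) := by linarith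
      have hwin := arr_window A (d := d) s (t - s)
      rw [show s + (t - s) = t by omega] at hwin
      have hw' : ∑ i ∈ A.J.filter (fun i => s < A.r i ∧ A.r i ≤ t), A.w i ≤ A.w j / A.ε := by
        by_contra hcon
        push Not at hcon
        apply e4
        rw [e1, A.hLsucc]
        exact .inr ⟨e2, s, ⟨hss, hmin⟩, by rw [← e1]; exact hcon⟩
      nlinarith
  have : (n : ℝ) ≤ min (A.p j : ℝ) (A.w j / A.ε / d) := le_min hnp hnw
  have hn0 : (0 : ℝ) ≤ n := by positivity
  rw [← hP]
  nlinarith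

lemma chg_total (A : AlgA) (osched : ℕ → Option ℕ) (hO : OffValid A.J A.r A.p osched)
    {d : ℝ} (hd : 0 < d) (T : ℕ) :
    ∑ t ∈ range T, chg A osched d t ≤
      ∑ j ∈ A.J \ A.Jimm, (min (A.p j : ℝ) (A.w j / A.ε / d)) ^ 2 / 2 := by
  refine le_trans ?_ (Finset.sum_le_sum fun j _ => chg_job A osched hO hd T j)
  simp only [Finset.sum_filter]
  rw [Finset.sum_comm]
  refine Finset.sum_le_sum fun t _ => ?_
  by_cases h : chg A osched d t = 0
  · simp [h]
  · obtain ⟨h1, h2⟩ := chg_ne_zero A osched d t h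
    obtain ⟨-, j, -, -, h3, -⟩ := inversion A h1 h2
    rw [Finset.sum_eq_single_of_mem j (alg_valid A t j h3).1]
    · rw [if_pos h3]
    · intro b _ hb
      rw [if_neg]; rw [h3]; exact fun h => hb (Option.some.inj h).symm

/-- The inequality at a single density threshold `d`. -/
lemma threshold (A : AlgA) (osched : ℕ → Option ℕ) (hO : OffValid A.J A.r A.p osched)
    {d : ℝ} (hd : 0 < d) (T : ℕ)
    (hT : ∀ j ∈ A.J, A.r j ≤ T ∧ (j ∉ A.Jimm → rem A.p A.sched j T = 0)) :
    ∑ j ∈ A.Jimm, (if d ≤ den A.p A.w j then (A.p j : ℝ) * volA A d (A.r j) else 0) ≤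
      ∑ t ∈ range T, vol A.J A.r A.p A.w osched d t +
      ∑ j ∈ A.J \ A.Jimm, (min (A.p j : ℝ) (A.w j / A.ε / d)) ^ 2 / 2 := by
  have h := potential (volA A d) (vol A.J A.r A.p A.w osched d)
    (arr (A.J \ A.Jimm) A.r A.p A.w d) (arr A.Jimm A.r A.p A.w d)
    (proc A.p A.w A.sched d) (proc A.p A.w osched d) (chg A osched d)
    (vol_zero _ _ (alg_valid A)) ((vol_zero _ _ hO.1).trans (arr_split _ _ _))
    (vol_succ _ _ (alg_valid A))
    (fun t => by rw [vol_succ _ _ hO.1, arr_split])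
    (proc_cases _ _ _ _) (proc_cases _ _ _ _) (proc_le_vol _ _ (alg_valid A))
    (proc_le_vol _ _ hO.1) (arr_nonneg _ _ _ _ _) (chg_nonneg _ _ _)
    (fun t h1 h2 => by unfold chg; rw [if_pos ⟨h1, h2⟩]; exact le_max_right _ _) T
  have hz : volA A d T = 0 := by
    refine Finset.sum_eq_zero fun j hj => ?_
    rw [mem_sdiff] at hj
    rw [(hT j hj.1).2 hj.2]; simp
  rw [hz, Finset.sum_add_distrib] at h
  have hc := chg_total A osched hO hd T
  have hl : ∑ t ∈ range (T + 1), arr A.Jimm A.r A.p A.w d t * volA A d t =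
      ∑ j ∈ A.Jimm, (if d ≤ den A.p A.w j then (A.p j : ℝ) * volA A d (A.r j) else 0) := by
    unfold arr
    simp only [Finset.sum_mul]
    rw [Finset.sum_comm]
    refine Finset.sum_congr rfl fun j hj => ?_
    have hj' := (hT j ((A.hJimm j).1 hj).1).1
    rw [Finset.sum_eq_single_of_mem (A.r j) (by rw [mem_range]; omega)]
    · simp
    · intro b _ hb
      simp [hb.symm]
  rw [hl] at h
  linarith

/-! ### Integration over the threshold -/

open MeasureTheory in
lemma integrable_ind (x : ℝ) : IntegrableOn (ind x) (Set.Ioi 0) := by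
  have : ind x = (Set.Iic x).indicator (fun _ => (1 : ℝ)) := by
    ext d; simp [ind, Set.indicator]
  rw [this, integrableOn_indicator_iff measurableSet_Iic, Set.inter_comm, Set.Ioi_inter_Iic]
  simp

open MeasureTheory in
lemma integral_ind {x : ℝ} (hx : 0 ≤ x) : ∫ d in Set.Ioi 0, ind x d = x := by
  have : ind x = (Set.Iic x).indicator (fun _ => (1 : ℝ)) := by
    ext d; simp [ind, Set.indicator]
  rw [this, setIntegral_indicator measurableSet_Iic, Set.Ioi_inter_Iic]
  simp [hx]

/-- An integrable majorant of `d ↦ min q (b / d) ^ 2`, where `c` is the crossing point `b / q`. -/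
def maj (q b c d : ℝ) : ℝ := q ^ 2 * ind c d + b ^ 2 * (Set.Ioi c).indicator (fun d => d ^ (-2 : ℝ)) d

lemma min_le_maj {q b c d : ℝ} (hq : 0 < q) (hb : 0 < b) (hd : 0 < d) :
    (min q (b / d)) ^ 2 ≤ maj q b c d := by
  have h0 : 0 ≤ min q (b / d) := by positivity
  unfold maj ind
  by_cases h : d ≤ c
  · rw [if_pos h, Set.indicator_of_notMem (by simpa using h)]
    nlinarith [min_le_left q (b / d)]
  · rw [if_neg h, Set.indicator_of_mem (by simpa using h), Real.rpow_neg hd.le]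
    have h1 := min_le_right q (b / d)
    calc (min q (b / d)) ^ 2 ≤ (b / d) ^ 2 := by gcongr
      _ = _ := by
        rw [show (2 : ℝ) = ((2 : ℕ) : ℝ) by norm_num, Real.rpow_natCast]
        field_simp; ring

open MeasureTheory in
lemma integrable_tail {c : ℝ} (hc : 0 < c) :
    IntegrableOn ((Set.Ioi c).indicator (fun d => d ^ (-2 : ℝ))) (Set.Ioi 0) := by
  rw [integrableOn_indicator_iff measurableSet_Ioi, Set.Ioi_inter_Ioi, max_eq_left hc.le]
  exact integrableOn_Ioi_rpow_of_lt (by norm_num) hc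

open MeasureTheory in
lemma integrable_maj (q b : ℝ) {c : ℝ} (hc : 0 < c) : IntegrableOn (maj q b c) (Set.Ioi 0) :=
  ((integrable_ind c).const_mul _).add ((integrable_tail hc).const_mul _)

open MeasureTheory in
lemma integral_maj {q b : ℝ} (hq : 0 < q) (hb : 0 < b) :
    ∫ d in Set.Ioi 0, maj q b (b / q) d = 2 * q * b := by
  have hc : 0 < b / q := by positivity
  unfold maj
  rw [integral_add ((integrable_ind _).const_mul _) ((integrable_tail hc).const_mul _),
    integral_const_mul, integral_const_mul, integral_ind hc.le,
    setIntegral_indicator measurableSet_Ioi, Set.Ioi_inter_Ioi, max_eq_right hc.le,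
    integral_Ioi_rpow_of_lt (by norm_num) hc, show (-2 : ℝ) + 1 = -1 by norm_num,
    Real.rpow_neg_one]
  field_simp; ring

lemma ind_min (x y d : ℝ) : ind (min x y) d = ind x d * ind y d := by
  unfold ind
  by_cases h1 : d ≤ x <;> by_cases h2 : d ≤ y <;> simp [h1, h2]

lemma den_pos (A : AlgA) {j : ℕ} (hj : j ∈ A.J) : 0 < den A.p A.w j :=
  div_pos (A.hw j hj) (by exact_mod_cast A.hp j hj)

lemma Jimm_sub (A : AlgA) {j : ℕ} (hj : j ∈ A.Jimm) : j ∈ A.J := ((A.hJimm j).1 hj).1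

open MeasureTheory in
/-- The threshold inequality integrated over `d > 0`. -/
lemma integrated (A : AlgA) (osched : ℕ → Option ℕ) (hO : OffValid A.J A.r A.p osched) (T : ℕ)
    (hT : ∀ j ∈ A.J, A.r j ≤ T ∧ (j ∉ A.Jimm → rem A.p A.sched j T = 0)) :
    ∑ j ∈ A.Jimm, ∑ i ∈ A.J \ A.Jimm, (if A.r i ≤ A.r j then
        (A.p j : ℝ) * rem A.p A.sched i (A.r j) else 0) * min (den A.p A.w j) (den A.p A.w i) ≤
      ∑ t ∈ range T, ∑ j ∈ A.J, (if A.r j ≤ t then (rem A.p osched j t : ℝ) else 0) *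
        den A.p A.w j +
      ∑ j ∈ A.J \ A.Jimm, A.p j * (A.w j / A.ε) := by
  have hq : ∀ j ∈ A.J \ A.Jimm, (0 : ℝ) < A.p j := fun j hj => by
    exact_mod_cast A.hp j (mem_sdiff.1 hj).1
  have hb : ∀ j ∈ A.J \ A.Jimm, 0 < A.w j / A.ε := fun j hj =>
    div_pos (A.hw j (mem_sdiff.1 hj).1) A.hε
  set f : ℝ → ℝ := fun d => ∑ j ∈ A.Jimm, ∑ i ∈ A.J \ A.Jimm, (if A.r i ≤ A.r j then
        (A.p j : ℝ) * rem A.p A.sched i (A.r j) else 0) *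
          ind (min (den A.p A.w j) (den A.p A.w i)) d with hf
  set g1 : ℝ → ℝ := fun d => ∑ t ∈ range T, ∑ j ∈ A.J,
    (if A.r j ≤ t then (rem A.p osched j t : ℝ) else 0) * ind (den A.p A.w j) d with hg1
  set g2 : ℝ → ℝ := fun d => ∑ j ∈ A.J \ A.Jimm,
    maj (A.p j) (A.w j / A.ε) (A.w j / A.ε / A.p j) d / 2 with hg2
  have fi : ∀ j ∈ A.Jimm, ∀ i ∈ A.J \ A.Jimm, IntegrableOn (fun d => (if A.r i ≤ A.r j then
        (A.p j : ℝ) * rem A.p A.sched i (A.r j) else 0) *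
          ind (min (den A.p A.w j) (den A.p A.w i)) d) (Set.Ioi 0) :=
    fun j _ i _ => (integrable_ind _).const_mul _
  have g1i : ∀ t ∈ range T, ∀ j ∈ A.J, IntegrableOn (fun d =>
      (if A.r j ≤ t then (rem A.p osched j t : ℝ) else 0) * ind (den A.p A.w j) d) (Set.Ioi 0) :=
    fun t _ j _ => (integrable_ind _).const_mul _
  have g2i : ∀ j ∈ A.J \ A.Jimm, IntegrableOn (fun d =>
      maj (A.p j) (A.w j / A.ε) (A.w j / A.ε / A.p j) d / 2) (Set.Ioi 0) :=
    fun j hj => (integrable_maj _ _ (div_pos (hb j hj) (hq j hj))).div_const _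
  have Hf : IntegrableOn f (Set.Ioi 0) :=
    integrable_finsetSum _ fun j hj => integrable_finsetSum _ fun i hi => fi j hj i hi
  have Hg1 : IntegrableOn g1 (Set.Ioi 0) :=
    integrable_finsetSum _ fun j hj => integrable_finsetSum _ fun i hi => g1i j hj i hi
  have Hg2 : IntegrableOn g2 (Set.Ioi 0) := integrable_finsetSum _ fun j hj => g2i j hj
  have hle : ∫ d in Set.Ioi 0, f d ≤ ∫ d in Set.Ioi 0, (g1 d + g2 d) := by
    refine setIntegral_mono_on Hf (Hg1.add Hg2) measurableSet_Ioi fun d hd => ?_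
    have hd : 0 < d := hd
    have h := threshold A osched hO hd T hT
    have e1 : f d = ∑ j ∈ A.Jimm,
        (if d ≤ den A.p A.w j then (A.p j : ℝ) * volA A d (A.r j) else 0) := by
      refine Finset.sum_congr rfl fun j _ => ?_
      by_cases h1 : d ≤ den A.p A.w j
      · rw [if_pos h1]
        unfold volA vol
        rw [Finset.mul_sum]
        refine Finset.sum_congr rfl fun i _ => ?_
        rw [ind_min]
        by_cases h2 : d ≤ den A.p A.w i <;> simp [ind, h1, h2]
      · rw [if_neg h1]
        refine Finset.sum_eq_zero fun i _ => ?_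
        rw [ind_min]; simp [ind, h1]
    have e2 : g1 d = ∑ t ∈ range T, vol A.J A.r A.p A.w osched d t := by
      refine Finset.sum_congr rfl fun t _ => Finset.sum_congr rfl fun j _ => ?_
      by_cases h2 : d ≤ den A.p A.w j <;> simp [ind, h2]
    have e3 : ∑ j ∈ A.J \ A.Jimm, (min (A.p j : ℝ) (A.w j / A.ε / d)) ^ 2 / 2 ≤ g2 d :=
      Finset.sum_le_sum fun j hj => by
        have := min_le_maj (c := A.w j / A.ε / A.p j) (hq j hj) (hb j hj) hd
        linarith
    rw [e1]
    simp only [e2]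
    linarith
  rw [integral_add Hg1 Hg2] at hle
  have i1 : ∫ d in Set.Ioi 0, f d = ∑ j ∈ A.Jimm, ∑ i ∈ A.J \ A.Jimm, (if A.r i ≤ A.r j then
        (A.p j : ℝ) * rem A.p A.sched i (A.r j) else 0) *
          min (den A.p A.w j) (den A.p A.w i) := by
    rw [hf, integral_finsetSum _ fun j hj => integrable_finsetSum _ fun i hi => fi j hj i hi]
    refine Finset.sum_congr rfl fun j hj => ?_
    rw [integral_finsetSum _ fun i hi => fi j hj i hi]
    refine Finset.sum_congr rfl fun i hi => ?_
    rw [integral_const_mul, integral_ind]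
    exact le_min (den_pos A (Jimm_sub A hj)).le (den_pos A (mem_sdiff.1 hi).1).le
  have i2 : ∫ d in Set.Ioi 0, g1 d = ∑ t ∈ range T, ∑ j ∈ A.J,
      (if A.r j ≤ t then (rem A.p osched j t : ℝ) else 0) * den A.p A.w j := by
    rw [hg1, integral_finsetSum _ fun j hj => integrable_finsetSum _ fun i hi => g1i j hj i hi]
    refine Finset.sum_congr rfl fun j hj => ?_
    rw [integral_finsetSum _ fun i hi => g1i j hj i hi]
    refine Finset.sum_congr rfl fun i hi => ?_
    rw [integral_const_mul, integral_ind (den_pos A hi).le]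
  have i3 : ∫ d in Set.Ioi 0, g2 d = ∑ j ∈ A.J \ A.Jimm, A.p j * (A.w j / A.ε) := by
    rw [hg2, integral_finsetSum _ g2i]
    refine Finset.sum_congr rfl fun j hj => ?_
    rw [integral_div, integral_maj (hq j hj) (hb j hj)]
    ring
  rw [i1, i2, i3] at hle
  exact hle

/-! ### Conclusion -/

/-- Both sums of `α_j` have summands `p_j · p_i(r_j) · min ρ_j ρ_i`. Including all simultaneous
arrivals can only increase them. -/
lemma alpha_le (A : AlgA) {j : ℕ} (hj : j ∈ A.J) :
    alpha A.J A.r A.p A.w A.sched A.Jimm j ≤ A.w j * A.p j / 2 +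
      ∑ i ∈ A.J \ A.Jimm, (if A.r i ≤ A.r j then
        (A.p j : ℝ) * rem A.p A.sched i (A.r j) else 0) * min (den A.p A.w j) (den A.p A.w i) := by
  have hp : (0 : ℝ) < A.p j := by exact_mod_cast A.hp j hj
  have hw : A.w j = den A.p A.w j * A.p j := by unfold den; field_simp
  set X := arrSet A.J A.r A.p A.sched A.Jimm j with hX
  have key : alpha A.J A.r A.p A.w A.sched A.Jimm j = A.w j * A.p j / 2 +
      ∑ i ∈ X, (A.p j : ℝ) * rem A.p A.sched i (A.r j) *
        min (den A.p A.w j) (den A.p A.w i) := by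
    unfold alpha wrem
    rw [← hX, ← Finset.sum_filter_add_sum_filter_not X (fun i => den A.p A.w j ≤ den A.p A.w i)
      (fun i => (A.p j : ℝ) * rem A.p A.sched i (A.r j) * min (den A.p A.w j) (den A.p A.w i))]
    simp only [not_le]
    have s1 : A.w j * ∑ i ∈ X.filter (fun i => den A.p A.w j ≤ den A.p A.w i),
        (rem A.p A.sched i (A.r j) : ℝ) =
        ∑ i ∈ X.filter (fun i => den A.p A.w j ≤ den A.p A.w i),
        (A.p j : ℝ) * rem A.p A.sched i (A.r j) * min (den A.p A.w j) (den A.p A.w i) := by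
      rw [Finset.mul_sum]
      refine Finset.sum_congr rfl fun i hi => ?_
      rw [min_eq_left (mem_filter.1 hi).2]
      conv_lhs => rw [hw]
      ring
    have s2 : A.p j * ∑ i ∈ X.filter (fun i => den A.p A.w i < den A.p A.w j),
        den A.p A.w i * rem A.p A.sched i (A.r j) =
        ∑ i ∈ X.filter (fun i => den A.p A.w i < den A.p A.w j),
        (A.p j : ℝ) * rem A.p A.sched i (A.r j) * min (den A.p A.w j) (den A.p A.w i) := by
      rw [Finset.mul_sum]
      refine Finset.sum_congr rfl fun i hi => ?_
      rw [min_eq_right (mem_filter.1 hi).2.le]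
      ring
    rw [s1, s2]; ring
  rw [key]
  gcongr
  have hXr : ∀ i ∈ X, i ∈ A.J \ A.Jimm ∧ A.r i ≤ A.r j := by
    intro i hi
    simp only [hX, arrSet, mem_filter] at hi
    exact ⟨mem_sdiff.2 ⟨hi.1, hi.2.2.1⟩, by omega⟩
  calc _ = ∑ i ∈ X, (if A.r i ≤ A.r j then
        (A.p j : ℝ) * rem A.p A.sched i (A.r j) else 0) *
          min (den A.p A.w j) (den A.p A.w i) :=
        Finset.sum_congr rfl fun i hi => by rw [if_pos (hXr i hi).2]
    _ ≤ _ := Finset.sum_le_sum_of_subset_of_nonneg (fun i hi => (hXr i hi).1) fun i hi _ =>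
        mul_nonneg (by split_ifs <;> positivity)
          (le_min (den_pos A hj).le (den_pos A (mem_sdiff.1 hi).1).le)

lemma fracFlow_ge (A : AlgA) (osched : ℕ → Option ℕ) (hO : OffValid A.J A.r A.p osched) (T : ℕ)
    {j : ℕ} (hj : j ∈ A.J) :
    ∑ t ∈ range T, (if A.r j ≤ t then (rem A.p osched j t : ℝ) else 0) * den A.p A.w j ≤
      fracFlow A.r A.p A.w osched j := by
  obtain ⟨T', hT'⟩ := hO.2 j hj
  have hs : Summable fun t : ℕ => if A.r j ≤ t then wrem A.p A.w osched j t else 0 := by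
    refine summable_of_ne_finset_zero (s := range T') fun t ht => ?_
    rw [mem_range, not_lt] at ht
    have : rem A.p osched j t = 0 := Nat.le_zero.1 (hT' ▸ rem_anti _ _ _ ht)
    simp [wrem, this]
  calc _ = ∑ t ∈ range T, if A.r j ≤ t then wrem A.p A.w osched j t else 0 := by
        refine Finset.sum_congr rfl fun t _ => ?_
        unfold wrem; split_ifs <;> ring
    _ ≤ _ := hs.sum_le_tsum _ fun t _ => by
        have := den_pos A hj
        unfold wrem; split_ifs <;> positivity

lemma exists_horizon (A : AlgA) :
    ∃ T, ∀ j ∈ A.J, A.r j ≤ T ∧ (j ∉ A.Jimm → rem A.p A.sched j T = 0) := by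
  have h : ∀ j, ∃ T, j ∈ A.J → A.r j ≤ T ∧ (j ∉ A.Jimm → rem A.p A.sched j T = 0) := by
    intro j
    by_cases hj : j ∈ A.J ∧ j ∉ A.Jimm
    · obtain ⟨T, hT⟩ := A.hdone j hj.1 hj.2
      refine ⟨max T (A.r j), fun _ => ⟨le_max_right _ _, fun _ => ?_⟩⟩
      exact Nat.le_zero.1 (hT ▸ rem_anti _ _ _ (le_max_left _ _))
    · exact ⟨A.r j, fun h => ⟨le_rfl, fun h' => absurd ⟨h, h'⟩ hj⟩⟩
  choose T hT using h
  refine ⟨A.J.sup T, fun j hj => ?_⟩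
  have hle : T j ≤ A.J.sup T := Finset.le_sup hj
  refine ⟨(hT j hj).1.trans hle, fun h => ?_⟩
  exact Nat.le_zero.1 ((hT j hj).2 h ▸ rem_anti _ _ _ hle)

/-- `∑_{j ∈ J^imm} α_j ≤ F^O + (1/ε)·∑_{j ∈ J} w_j·p_j`, where
`F^O` is the optimal total fractional weighted flow-time for the instance `J`
(stated for every valid offline schedule, hence for the optimal one). -/
theorem alpha_Jimm_le_opt (A : AlgA) (osched : ℕ → Option ℕ)
    (hO : OffValid A.J A.r A.p osched) :
    ∑ j ∈ A.Jimm, alpha A.J A.r A.p A.w A.sched A.Jimm j ≤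
      (∑ j ∈ A.J, fracFlow A.r A.p A.w osched j) +
        (1 / A.ε) * ∑ j ∈ A.J, A.w j * A.p j := by
  obtain ⟨T, hT⟩ := exists_horizon A
  have h := integrated A osched hO T hT
  have hsub : A.Jimm ⊆ A.J := fun j hj => Jimm_sub A hj
  have hε := A.hε
  have hε2 : 1 / 2 ≤ 1 / A.ε := by
    have : A.ε ≤ 2 := by nlinarith [A.hε2]
    exact one_div_le_one_div_of_le hε this
  have hα : ∑ j ∈ A.Jimm, alpha A.J A.r A.p A.w A.sched A.Jimm j ≤
      ∑ j ∈ A.Jimm, (1 / A.ε) * (A.w j * A.p j) +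
      ∑ j ∈ A.Jimm, ∑ i ∈ A.J \ A.Jimm, (if A.r i ≤ A.r j then
        (A.p j : ℝ) * rem A.p A.sched i (A.r j) else 0) *
          min (den A.p A.w j) (den A.p A.w i) := by
    rw [← Finset.sum_add_distrib]
    refine Finset.sum_le_sum fun j hj => (alpha_le A (hsub hj)).trans ?_
    have hwp : 0 ≤ A.w j * A.p j := mul_nonneg (A.hw j (hsub hj)).le (by positivity)
    nlinarith
  have hF : ∑ t ∈ range T, ∑ j ∈ A.J, (if A.r j ≤ t then (rem A.p osched j t : ℝ) else 0) *
        den A.p A.w j ≤ ∑ j ∈ A.J, fracFlow A.r A.p A.w osched j := by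
    rw [Finset.sum_comm]
    exact Finset.sum_le_sum fun j hj => fracFlow_ge A osched hO T hj
  have hU : ∑ j ∈ A.J \ A.Jimm, A.p j * (A.w j / A.ε) =
      ∑ j ∈ A.J \ A.Jimm, (1 / A.ε) * (A.w j * A.p j) :=
    Finset.sum_congr rfl fun j _ => by ring
  rw [Finset.mul_sum, ← Finset.sum_sdiff (f := fun j => (1 / A.ε) * (A.w j * A.p j)) hsub]
  linarith
end NPSched
end
end

section
/- There is an absolute constant c such that ∑_{j∈J} α_j⁺ ≤ (c/ε)·(∑_{j∈J} w_j·p_j + ∑_{j∈J^imm} α_j⁺). -/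
/-!
The bound holds with `c = 4`, and uses nothing about the schedule beyond the rejection rule.

A job outside `J⁺` satisfies `α_j⁺ < w_j p_j / ε` by definition, so these jobs contribute at most
`(1/ε) ∑ w_j p_j`. For the jobs of `J⁺`, consider one bucket of `T⁺`. Both `α⁺/w` and `w` vary
within it by a factor less than `2`, so `α⁺` varies by a factor less than `4`
(`alphaPlus_le_of_bucketPlus_eq`). The jobs at positions `1, 1 + k, 1 + 2k, …` of the bucket are
rejected, which is at least a `1/k = ε` fraction of them (`card_le_mul_card_rank`). Averaging, the
sum of `α⁺` over the bucket is at most `4k` times the sum over its rejected jobs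
(`sum_le_of_comparable`). Summing over the buckets bounds the contribution of `J⁺` by
`(4/ε) ∑_{J^imm} α_j⁺`.
-/

open Finset
open scoped Classical

noncomputable section

namespace NPSched

theorem arrLE_trans {r : ℕ → ℕ} {a b c : ℕ} (h₁ : arrLE r a b) (h₂ : arrLE r b c) :
    arrLE r a c := by
  unfold arrLE at *; omega

/-- If ranks are counted in arrival order within `S`, then the elements whose rank is congruent
to `1` modulo `k` make up at least a `1/k` fraction of `S`: the rank is a bijection from `S` onto
`{1, …, #S}`, and each block of at most `k` consecutive ranks starts with such an element. -/
theorem card_le_mul_card_rank (r : ℕ → ℕ) (S : Finset ℕ) {k : ℕ} (hk : 0 < k) :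
    S.card ≤ k * (S.filter fun j => (S.filter fun i => arrLE r i j).card % k = 1 % k).card := by
  set rk : ℕ → ℕ := fun j => (S.filter fun i => arrLE r i j).card with hrk
  have hself : ∀ j ∈ S, j ∈ S.filter fun i => arrLE r i j := fun j hj =>
    mem_filter.2 ⟨hj, Or.inr ⟨rfl, le_rfl⟩⟩
  have key : ∀ i ∈ S, ∀ j ∈ S, arrLE r i j → rk i = rk j → i = j := by
    intro i _ j hj hij h
    have hsub : (S.filter fun x => arrLE r x i) ⊆ S.filter fun x => arrLE r x j := by
      intro x hx
      rw [mem_filter] at hx ⊢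
      exact ⟨hx.1, arrLE_trans hx.2 hij⟩
    have heq := Finset.eq_of_subset_of_card_le hsub h.ge
    have hji := (mem_filter.1 (heq ▸ hself j hj)).2
    unfold arrLE at hij hji
    omega
  have hinj : Set.InjOn rk S := by
    intro i hi j hj h
    have htot : arrLE r i j ∨ arrLE r j i := by unfold arrLE; omega
    rcases htot with h' | h'
    · exact key i hi j hj h' h
    · exact (key j hj i hi h' h.symm).symm
  have himg : S.image rk = Icc 1 S.card := by
    apply Finset.eq_of_subset_of_card_le
    · intro x hx
      obtain ⟨j, hj, rfl⟩ := mem_image.1 hx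
      exact mem_Icc.2 ⟨Finset.card_pos.2 ⟨j, hself j hj⟩, card_le_card (filter_subset _ _)⟩
    · rw [card_image_of_injOn hinj]; simp
  -- Send each element to the rejected element that opens its block of ranks.
  have hex : ∀ j ∈ S, ∃ i ∈ S, rk i = k * ((rk j - 1) / k) + 1 := by
    intro j hj
    have h1 : rk j ∈ Icc 1 S.card := himg ▸ mem_image_of_mem rk hj
    rw [mem_Icc] at h1
    have h2 := Nat.mul_div_le (rk j - 1) k
    have h3 : k * ((rk j - 1) / k) + 1 ∈ S.image rk := by
      rw [himg, mem_Icc]; omega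
    simpa using h3
  choose! f hfS hf using hex
  refine Finset.card_le_mul_card_image_of_maps_to (f := f) (fun j hj => ?_) k (fun b _ => ?_)
  · refine mem_filter.2 ⟨hfS j hj, ?_⟩
    change rk (f j) % k = 1 % k
    rw [hf j hj, Nat.mul_add_mod]
  · have hmaps : ∀ j ∈ S.filter (fun j => f j = b), rk j ∈ Ico (rk b) (rk b + k) := by
      intro j hj
      obtain ⟨hjS, rfl⟩ := mem_filter.1 hj
      have h1 : rk j ∈ Icc 1 S.card := himg ▸ mem_image_of_mem rk hjS
      rw [mem_Icc] at h1
      have h2 := Nat.div_add_mod (rk j - 1) k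
      have h3 := Nat.mod_lt (rk j - 1) hk
      rw [hf j hjS, mem_Ico]
      omega
    have := Finset.card_le_card_of_injOn rk hmaps
      (hinj.mono fun x hx => (mem_filter.1 hx).1)
    simpa using this

/-- If every value of `a` on `S` is at most `C` times every value on `R`, and `R` has at least
`#S / k` elements, then averaging over `R` bounds the sum over `S` by `C k` times that over `R`. -/
theorem sum_le_of_comparable {S R : Finset ℕ} {a : ℕ → ℝ} {k : ℕ} {C : ℝ} (hC : 0 ≤ C)
    (hR : ∀ i ∈ R, 0 ≤ a i) (h : ∀ j ∈ S, ∀ i ∈ R, a j ≤ C * a i)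
    (hcard : S.card ≤ k * R.card) :
    ∑ j ∈ S, a j ≤ C * k * ∑ i ∈ R, a i := by
  rcases R.eq_empty_or_nonempty with rfl | hne
  · have : S = ∅ := by simpa using hcard
    simp [this]
  have hpos : (0 : ℝ) < R.card := by exact_mod_cast hne.card_pos
  have hcard' : (S.card : ℝ) ≤ k * R.card := by exact_mod_cast hcard
  have hsum : 0 ≤ ∑ i ∈ R, a i := sum_nonneg hR
  refine le_of_mul_le_mul_left ?_ hpos
  calc (R.card : ℝ) * ∑ j ∈ S, a j = ∑ i ∈ R, ∑ j ∈ S, a j := by simp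
    _ ≤ ∑ i ∈ R, ∑ _j ∈ S, C * a i := sum_le_sum fun i hi => sum_le_sum fun j hj => h j hj i hi
    _ = S.card * (C * ∑ i ∈ R, a i) := by simp [mul_sum]
    _ ≤ k * R.card * (C * ∑ i ∈ R, a i) := by gcongr
    _ = R.card * (C * k * ∑ i ∈ R, a i) := by ring

theorem le_two_mul_of_log_eq {x y : ℝ} (hy : 0 < y) (h : Int.log 2 x = Int.log 2 y) :
    x ≤ 2 * y := by
  have h1 := Int.lt_zpow_succ_log_self (b := 2) one_lt_two x
  have h2 := Int.zpow_log_le_self (b := 2) one_lt_two hy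
  rw [h, zpow_add_one₀ (by norm_num)] at h1
  push_cast at h1 h2
  linarith

theorem alphaPlus_nonneg (A : AlgA) {j : ℕ} (hj : j ∈ A.J) :
    0 ≤ alphaPlus A.J A.r A.p A.w A.sched A.Jimm j := by
  have hw := (A.hw j hj).le
  unfold alphaPlus
  refine add_nonneg (mul_nonneg hw (sum_nonneg fun _ _ => Nat.cast_nonneg _))
    (mul_nonneg (Nat.cast_nonneg _) (sum_nonneg fun i hi => ?_))
  have hi := A.hw i (mem_filter.1 (mem_filter.1 hi).1).1
  unfold wrem den
  positivity

theorem alphaPlus_le_of_bucketPlus_eq (A : AlgA) {i j : ℕ}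
    (hi : i ∈ Jplus A.J A.r A.p A.w A.sched A.Jimm A.ε)
    (hj : j ∈ Jplus A.J A.r A.p A.w A.sched A.Jimm A.ε)
    (h : bucketPlus A.J A.r A.p A.w A.sched A.Jimm j =
      bucketPlus A.J A.r A.p A.w A.sched A.Jimm i) :
    alphaPlus A.J A.r A.p A.w A.sched A.Jimm j ≤
      4 * alphaPlus A.J A.r A.p A.w A.sched A.Jimm i := by
  obtain ⟨hiJ, hi⟩ := mem_filter.1 hi
  obtain ⟨hjJ, -⟩ := mem_filter.1 hj
  have hwi := A.hw i hiJ
  have hwj := A.hw j hjJ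
  have hpi : (0 : ℝ) < A.p i := by exact_mod_cast A.hp i hiJ
  have hαi := (div_pos (mul_pos hwi hpi) A.hε).trans_le hi
  obtain ⟨h1, h2⟩ := Prod.ext_iff.1 h
  have h1 := le_two_mul_of_log_eq (div_pos hαi hwi) h1
  have h2 := le_two_mul_of_log_eq hwi h2
  calc alphaPlus A.J A.r A.p A.w A.sched A.Jimm j
      = alphaPlus A.J A.r A.p A.w A.sched A.Jimm j / A.w j * A.w j := by field_simp
    _ ≤ (2 * (alphaPlus A.J A.r A.p A.w A.sched A.Jimm i / A.w i)) * (2 * A.w i) :=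
        mul_le_mul h1 h2 hwj.le (by positivity)
    _ = 4 * alphaPlus A.J A.r A.p A.w A.sched A.Jimm i := by field_simp; ring

/-- The contribution of `J⁺` is charged, bucket by bucket, to the rejections in table `T⁺`. -/
theorem sum_Jplus_le (A : AlgA) :
    ∑ j ∈ Jplus A.J A.r A.p A.w A.sched A.Jimm A.ε,
        alphaPlus A.J A.r A.p A.w A.sched A.Jimm j ≤
      4 * A.k * ∑ j ∈ A.Jimm, alphaPlus A.J A.r A.p A.w A.sched A.Jimm j := by
  have hk : 0 < A.k := by
    have : (0 : ℝ) < A.k := A.hk ▸ one_div_pos.2 A.hε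
    exact_mod_cast this
  set P := Jplus A.J A.r A.p A.w A.sched A.Jimm A.ε with hP
  set a := alphaPlus A.J A.r A.p A.w A.sched A.Jimm with ha
  set B := bucketPlus A.J A.r A.p A.w A.sched A.Jimm with hB
  set R := P.filter fun j => rankPlus A.J A.r A.p A.w A.sched A.Jimm A.ε j % A.k = 1 % A.k with hR
  have hPJ : P ⊆ A.J := filter_subset _ _
  have hRimm : R ⊆ A.Jimm := by
    intro j hj
    obtain ⟨hjP, hj⟩ := mem_filter.1 hj
    exact (A.hJimm j).2 ⟨hPJ hjP, Or.inl ⟨hjP, hj⟩⟩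
  have hbucket : ∀ b, ∑ j ∈ P with B j = b, a j ≤ 4 * A.k * ∑ j ∈ R with B j = b, a j := by
    intro b
    have hRP : ∀ i ∈ R.filter (fun j => B j = b), i ∈ P ∧ B i = b := fun i hi =>
      ⟨(mem_filter.1 (mem_filter.1 hi).1).1, (mem_filter.1 hi).2⟩
    refine sum_le_of_comparable (by norm_num)
      (fun i hi => alphaPlus_nonneg A (hPJ (hRP i hi).1)) (fun j hj i hi => ?_) ?_
    · obtain ⟨hj, hjb⟩ := mem_filter.1 hj
      exact alphaPlus_le_of_bucketPlus_eq A (hRP i hi).1 hj (hjb.trans (hRP i hi).2.symm)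
    · refine (card_le_mul_card_rank A.r (P.filter fun j => B j = b) hk).trans
        (Nat.mul_le_mul_left _ (card_le_card fun j hj => ?_))
      obtain ⟨hj, hrk⟩ := mem_filter.1 hj
      obtain ⟨hjP, rfl⟩ := mem_filter.1 hj
      rw [filter_filter] at hrk
      exact mem_filter.2 ⟨mem_filter.2 ⟨hjP, hrk⟩, rfl⟩
  have hmapsP : ∀ j ∈ P, B j ∈ P.image B := fun j hj => mem_image_of_mem B hj
  calc ∑ j ∈ P, a j = ∑ b ∈ P.image B, ∑ j ∈ P with B j = b, a j :=
        (sum_fiberwise_of_maps_to hmapsP a).symm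
    _ ≤ ∑ b ∈ P.image B, 4 * A.k * ∑ j ∈ R with B j = b, a j :=
        sum_le_sum fun b _ => hbucket b
    _ = 4 * A.k * ∑ j ∈ R, a j := by
        rw [← mul_sum, sum_fiberwise_of_maps_to
          (fun j hj => hmapsP j (filter_subset _ _ hj)) a]
    _ ≤ 4 * A.k * ∑ j ∈ A.Jimm, a j := by
        gcongr
        exact fun j hj _ => alphaPlus_nonneg A ((A.hJimm j).1 hj).1

/-- `∑_{j∈J} α_j⁺ ≤ (c/ε)·(∑_{j∈J} w_j·p_j + ∑_{j∈J^imm} α_j⁺)`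
for an absolute constant `c`. -/
theorem alphaPlus_sum_le :
    ∃ c : ℝ, 0 < c ∧ ∀ A : AlgA,
      ∑ j ∈ A.J, alphaPlus A.J A.r A.p A.w A.sched A.Jimm j ≤
        (c / A.ε) * ((∑ j ∈ A.J, A.w j * A.p j) +
          ∑ j ∈ A.Jimm, alphaPlus A.J A.r A.p A.w A.sched A.Jimm j) := by
  refine ⟨4, by norm_num, fun A => ?_⟩
  have hε := A.hε
  have hplus := sum_Jplus_le A
  rw [A.hk] at hplus
  have hwp : ∀ j ∈ A.J, 0 ≤ A.w j * A.p j := fun j hj =>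
    mul_nonneg (A.hw j hj).le (Nat.cast_nonneg _)
  have hrest : ∑ j ∈ A.J with ¬ A.w j * A.p j / A.ε ≤
        alphaPlus A.J A.r A.p A.w A.sched A.Jimm j,
      alphaPlus A.J A.r A.p A.w A.sched A.Jimm j ≤ ∑ j ∈ A.J, A.w j * A.p j / A.ε :=
    (sum_le_sum fun j hj => (not_le.1 (mem_filter.1 hj).2).le).trans
      (sum_le_sum_of_subset_of_nonneg (filter_subset _ _) fun j hj _ =>
        div_nonneg (hwp j hj) hε.le)
  rw [← sum_div] at hrest
  have hW : 0 ≤ (∑ j ∈ A.J, A.w j * A.p j) / A.ε := div_nonneg (sum_nonneg hwp) hε.le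
  rw [← sum_filter_add_sum_filter_not A.J (fun j => A.w j * A.p j / A.ε ≤
    alphaPlus A.J A.r A.p A.w A.sched A.Jimm j)]
  unfold Jplus at hplus
  calc _ ≤ 4 * (1 / A.ε) * (∑ j ∈ A.Jimm, alphaPlus A.J A.r A.p A.w A.sched A.Jimm j) +
        4 * ((∑ j ∈ A.J, A.w j * A.p j) / A.ε) := add_le_add hplus (by linarith)
    _ = _ := by ring
end NPSched
end
end

section
/- There is an absolute constant c such that ∑_{j∈J} α_j⁻ ≤ (c/ε)·(∑_{j∈J} w_j·p_j + ∑_{j∈J^imm} α_j). -/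
/-! Each bucket of `T⁻` has comparable values `α_j⁻`, so its rejected jobs pay, up to a factor
`O(1/ε)`, for everything except one last incomplete block of at most `1/ε` jobs
(`table_sum_le`). It remains to bound `∑ 2 ^ a` over the nonempty buckets `(a, d, s)` of `T⁻`
(`AlgA.sum_buckets_le`).

A job of bucket `(a, d, s)` has `α_j⁻ = p_j X`, where `X ≈ 2 ^ (a - s)` is the weight pending below
class `d`, and membership in `J⁻` gives `2 ^ s ≲ ε X / 2 ^ d`. Summing two geometric series, over `s`
and over `a - s`, the buckets of middle index `d` contribute `O(ε) · max X ^ 2 / 2 ^ d`.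

The weight `W_i` pending in a single class `i` satisfies `W_i ^ 2 / 2 ^ i ≤ 4 F_i` with
`F_i = ∑ (w_j p_j + α_j⁺)` over the jobs of class `i` (`AlgA.class_weight_sq`): each pair of pending
jobs is charged to the one that arrived later, through its `α⁺`. A discrete Hardy inequality
(`hardy_point`, `hardy_sum`) passes from single classes to all classes below `d`, so that
`∑ 2 ^ a = O(ε) · ∑ (w_j p_j + α_j⁺)`.

Finally `∑ α_j⁺` is `O(1/ε)` times the right-hand side (`AlgA.sum_aP_le`), because in `T⁺` the first
job of each bucket is rejected and no incomplete block is left unpaid. The gained factor `ε` cancels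
this loss, and only the block length `1/ε` survives.
-/

open Finset
open scoped Classical

noncomputable section

namespace NPSched

/-! ### Counting in buckets -/

lemma rank_injOn (S : Finset ℕ) (r : ℕ → ℕ) :
    Set.InjOn (fun j => #{j' ∈ S | arrLE r j' j}) S := by
  have key : ∀ a ∈ S, ∀ b ∈ S, arrLE r a b → a ≠ b →
      #{j' ∈ S | arrLE r j' a} < #{j' ∈ S | arrLE r j' b} := by
    intro a ha b hb hab hne
    apply Finset.card_lt_card
    rw [Finset.ssubset_iff_of_subset]
    · refine ⟨b, Finset.mem_filter.2 ⟨hb, by unfold arrLE; omega⟩, fun h => ?_⟩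
      have := (Finset.mem_filter.1 h).2
      unfold arrLE at hab this
      omega
    · intro x hx
      obtain ⟨h1, h2⟩ := Finset.mem_filter.1 hx
      refine Finset.mem_filter.2 ⟨h1, ?_⟩
      unfold arrLE at hab h2 ⊢
      omega
  intro a ha b hb hab
  by_contra hne
  have : arrLE r a b ∨ arrLE r b a := by unfold arrLE; omega
  rcases this with h | h
  · exact (key a ha b hb h hne).ne hab
  · exact (key b hb a ha h (Ne.symm hne)).ne hab.symm

/-- Numbering the elements of a finite set by arrival order uses exactly `1, …, #S`. -/
lemma rank_image (S : Finset ℕ) (r : ℕ → ℕ) :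
    S.image (fun j => #{j' ∈ S | arrLE r j' j}) = Finset.Ioc 0 #S := by
  apply Finset.eq_of_subset_of_card_le
  · intro n hn
    obtain ⟨j, hj, rfl⟩ := Finset.mem_image.1 hn
    rw [Finset.mem_Ioc]
    refine ⟨Finset.card_pos.2 ⟨j, ?_⟩, Finset.card_filter_le _ _⟩
    exact Finset.mem_filter.2 ⟨hj, Or.inr ⟨rfl, le_rfl⟩⟩
  · rw [Finset.card_image_of_injOn (rank_injOn S r)]
    simp

/-- A condition on the position within its bucket is met by as many jobs as positions. -/
lemma bucket_count {β : Type*} [DecidableEq β] (S : Finset ℕ) (key : ℕ → β) (r : ℕ → ℕ)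
    (P : ℕ → Prop) [DecidablePred P] (b : β) :
    #{j ∈ {j ∈ S | key j = b} | P #{j' ∈ S | key j' = key j ∧ arrLE r j' j}} =
      #{n ∈ Finset.Ioc 0 #{j ∈ S | key j = b} | P n} := by
  rw [← rank_image _ r, Finset.filter_image, Finset.card_image_of_injOn]
  · congr 1
    apply Finset.filter_congr
    intro j hj
    rw [Finset.mem_filter] at hj
    rw [hj.2, Finset.filter_filter]
  · exact (rank_injOn _ r).mono (by intro x; simp; tauto)

/-- Charging a table to its rejected jobs. The weight function `f` is constant up to the factor `C`
on each bucket, and a bucket of `m` jobs contains at least `m / k - e` rejected ones, so the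
rejected jobs pay for all but `e` blocks of `k` jobs in each bucket. -/
lemma table_sum_le {β : Type*} [DecidableEq β] (S : Finset ℕ) (key : ℕ → β) (r : ℕ → ℕ)
    (P : ℕ → Prop) [DecidablePred P] (f : ℕ → ℝ) (M : β → ℝ) (C : ℝ) (hC : 0 ≤ C) (hM : ∀ b, 0 ≤ M b)
    (h1 : ∀ j ∈ S, M (key j) ≤ f j) (h2 : ∀ j ∈ S, f j ≤ C * M (key j)) (k e : ℕ)
    (hk : ∀ m : ℕ, m ≤ k * (#{n ∈ Finset.Ioc 0 m | P n} + e)) :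
    ∑ j ∈ S, f j ≤ C * k *
      (∑ j ∈ S with P #{j' ∈ S | key j' = key j ∧ arrLE r j' j}, f j
        + e * ∑ b ∈ S.image key, M b) := by
  rw [← Finset.sum_fiberwise_of_maps_to (s := S) (t := S.image key) (g := key)
      (fun x hx => Finset.mem_image_of_mem _ hx) f,
    ← Finset.sum_fiberwise_of_maps_to (t := S.image key) (g := key)
      (fun x hx => Finset.mem_image_of_mem _ (Finset.mem_of_mem_filter x hx)) f,
    Finset.mul_sum, ← Finset.sum_add_distrib, Finset.mul_sum]
  apply Finset.sum_le_sum
  intro b _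
  set F := {j ∈ S | key j = b} with hF
  set q := #{n ∈ Finset.Ioc 0 #F | P n} with hq
  have a1 : ∑ j ∈ F, f j ≤ #F * (C * M b) := by
    rw [← nsmul_eq_mul]
    apply Finset.sum_le_card_nsmul
    intro j hj
    rw [hF, Finset.mem_filter] at hj
    simpa [hj.2] using h2 j hj.1
  have a2 : (#F : ℝ) ≤ k * (q + e) := by exact_mod_cast hk #F
  have a3 : q * M b ≤ ∑ j ∈ {j ∈ S | P #{j' ∈ S | key j' = key j ∧ arrLE r j' j}} with key j = b,
      f j := by
    rw [hq, ← bucket_count S key r P b, Finset.filter_comm, ← nsmul_eq_mul]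
    apply Finset.card_nsmul_le_sum
    intro j hj
    simp only [Finset.mem_filter] at hj
    rw [← hj.2]
    exact h1 j hj.1.1
  have hCM : 0 ≤ C * M b := mul_nonneg hC (hM b)
  calc _ ≤ #F * (C * M b) := a1
    _ ≤ k * (q + e) * (C * M b) := by gcongr
    _ = C * k * (q * M b + e * M b) := by ring
    _ ≤ _ := by gcongr

lemma count_zero (k m : ℕ) (hk : 0 < k) : m ≤ k * (#{n ∈ Finset.Ioc 0 m | n % k = 0} + 1) := by
  have : {n ∈ Finset.Ioc 0 m | n % k = 0} = {n ∈ Finset.Ioc 0 m | k ∣ n} := by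
    simp only [Nat.dvd_iff_mod_eq_zero]
  rw [this, Nat.Ioc_filter_dvd_card_eq_div]
  exact (Nat.lt_mul_div_succ m hk).le

lemma count_one (k m : ℕ) (hk : 0 < k) :
    m ≤ k * (#{n ∈ Finset.Ioc 0 m | n % k = 1 % k} + 0) := by
  -- each position `n` is sent to the first position of its block of length `k`
  have h := Finset.card_le_mul_card_image_of_maps_to (s := Finset.Ioc 0 m)
    (t := {n ∈ Finset.Ioc 0 m | n % k = 1 % k}) (f := fun n => k * ((n - 1) / k) + 1) ?_ k ?_
  · simpa using h
  · intro n hn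
    simp only [Finset.mem_Ioc, Finset.mem_filter] at hn ⊢
    have := Nat.mul_div_le (n - 1) k
    refine ⟨by omega, ?_⟩
    rw [Nat.mul_add_mod]
  · intro b _
    calc _ ≤ #(Finset.Ico b (b + k)) := by
          apply Finset.card_le_card
          intro n hn
          simp only [Finset.mem_Ioc, Finset.mem_filter, Finset.mem_Ico] at hn ⊢
          have h1 := Nat.mul_div_le (n - 1) k
          have h2 := Nat.lt_mul_div_succ (n - 1) hk
          rw [mul_add] at h2
          omega
      _ = k := by simp

/-! ### Geometric sums -/

lemma geo_sum_le {b : ℝ} (hb : 1 < b) (T : Finset ℤ) :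
    ∀ B : ℝ, 0 ≤ B → (∀ n ∈ T, b ^ n ≤ B) → ∑ n ∈ T, b ^ n ≤ b / (b - 1) * B := by
  have hb0 : 0 < b - 1 := by linarith
  induction T using Finset.induction_on_max with
  | empty => intro B hB _; simp only [Finset.sum_empty]; positivity
  | insert a s hs ih =>
    intro B hB h
    rw [Finset.sum_insert (fun ha => lt_irrefl _ (hs a ha))]
    have h1 := ih (b ^ (a - 1)) (by positivity) (fun n hn =>
      zpow_le_zpow_right₀ hb.le (by have := hs n hn; omega))
    have h2 := h a (Finset.mem_insert_self _ _)
    have h3 : b ^ a + b / (b - 1) * b ^ (a - 1) = b / (b - 1) * b ^ a := by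
      rw [zpow_sub_one₀ (by linarith)]
      field_simp
      ring
    calc _ ≤ b ^ a + b / (b - 1) * b ^ (a - 1) := by gcongr
      _ = b / (b - 1) * b ^ a := h3
      _ ≤ _ := by gcongr

lemma geo_sum_le' {ι : Type*} {b : ℝ} (hb : 1 < b) (T : Finset ι) (f : ι → ℤ)
    (hf : Set.InjOn f T) (B : ℝ) (hB : 0 ≤ B) (h : ∀ n ∈ T, b ^ f n ≤ B) :
    ∑ n ∈ T, b ^ f n ≤ b / (b - 1) * B := by
  rw [← Finset.sum_image (f := fun n : ℤ => b ^ n) hf]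
  apply geo_sum_le hb _ B hB
  simpa using h

/-- A weighted Hardy inequality: if the parts of class `i` satisfy `W i ^ 2 ≤ 4 * 2 ^ i * F i`, the
total over the classes below `d` satisfies the same kind of bound, up to geometrically decaying
contributions of the lower classes. -/
lemma hardy_point (I : Finset ℤ) (W F : ℤ → ℝ) (d : ℤ) (hI : ∀ i ∈ I, i < d)
    (hW : ∀ i ∈ I, W i ^ 2 ≤ 4 * 2 ^ i * F i) :
    (∑ i ∈ I, W i) ^ 2 ≤ 2 ^ d * (12 * ∑ i ∈ I, F i * (3 / 2 : ℝ) ^ (i - d)) := by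
  -- Cauchy–Schwarz with the weights `(4 / 3) ^ (i - d)`, whose sum is at most `3`
  have hcs := Finset.sum_sq_le_sum_mul_sum_of_sq_le_mul I (r := W)
    (f := fun i => (4 / 3 : ℝ) ^ (i - d)) (g := fun i => W i ^ 2 / (4 / 3 : ℝ) ^ (i - d))
    (fun i _ => by positivity) (fun i _ => by positivity) (fun i _ => by
      have : (4 / 3 : ℝ) ^ (i - d) ≠ 0 := by positivity
      exact (mul_div_cancel₀ _ this).ge)
  have h1 : ∑ i ∈ I, (4 / 3 : ℝ) ^ (i - d) ≤ 3 := by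
    have := geo_sum_le' (b := 4 / 3) (by norm_num) I (fun i => i - d)
      (fun a _ b _ h => by simpa using h) ((4 / 3) ^ (-1 : ℤ)) (by positivity)
      (fun i hi => zpow_le_zpow_right₀ (by norm_num) (by have := hI i hi; omega))
    norm_num at this ⊢
    exact this
  have h2 : ∑ i ∈ I, W i ^ 2 / (4 / 3 : ℝ) ^ (i - d) ≤
      4 * 2 ^ d * ∑ i ∈ I, F i * (3 / 2 : ℝ) ^ (i - d) := by
    rw [Finset.mul_sum]
    apply Finset.sum_le_sum
    intro i hi
    rw [div_le_iff₀ (by positivity)]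
    refine (hW i hi).trans (le_of_eq ?_)
    have e : (2 : ℝ) ^ i = 2 ^ d * ((3 / 2 : ℝ) ^ (i - d) * (4 / 3 : ℝ) ^ (i - d)) := by
      rw [← mul_zpow]
      norm_num
      rw [← zpow_add₀ (by norm_num)]
      congr 1
      ring
    rw [e]
    ring
  have h3 : 0 ≤ ∑ i ∈ I, W i ^ 2 / (4 / 3 : ℝ) ^ (i - d) :=
    Finset.sum_nonneg fun i _ => by positivity
  calc _ ≤ _ := hcs
    _ ≤ 3 * (4 * 2 ^ d * ∑ i ∈ I, F i * (3 / 2 : ℝ) ^ (i - d)) := by gcongr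
    _ = _ := by ring

/-- Summing the right-hand sides of the weighted Hardy inequality over all `d`. -/
lemma hardy_sum (D I : Finset ℤ) (F : ℤ → ℝ) (hF : ∀ i, 0 ≤ F i) :
    ∑ d ∈ D, 12 * ∑ i ∈ I with i < d, F i * (3 / 2 : ℝ) ^ (i - d) ≤ 24 * ∑ i ∈ I, F i := by
  rw [← Finset.mul_sum]
  simp only [Finset.sum_filter]
  rw [Finset.sum_comm]
  have : ∀ i ∈ I, (∑ d ∈ D, if i < d then F i * (3 / 2 : ℝ) ^ (i - d) else 0) ≤ 2 * F i := by
    intro i _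
    rw [← Finset.sum_filter, ← Finset.mul_sum]
    have := geo_sum_le' (b := 3 / 2) (by norm_num) {d ∈ D | i < d} (fun d => i - d)
      (fun a _ b _ h => by simpa using h) ((3 / 2) ^ (-1 : ℤ)) (by positivity)
      (fun d hd => zpow_le_zpow_right₀ (by norm_num)
        (by have := (Finset.mem_filter.1 hd).2; omega))
    norm_num at this
    nlinarith [hF i]
  have := Finset.sum_le_sum this
  rw [← Finset.mul_sum] at this
  linarith

/-- The buckets `(a, d, s)` of fixed middle index `d`: a bound `2 ^ (a - s) ≤ 2 √(2 ^ d H)` on the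
weight and the defining inequality of `J⁻` make `2 ^ a` geometrically summable in `s` and in
`a - s`, and the latter inequality supplies the factor `ε`. -/
lemma triple_sum_fixed (T : Finset (ℤ × ℤ × ℤ)) (d : ℤ) (ε H : ℝ) (hε : 0 < ε) (hH : 0 ≤ H)
    (hd : ∀ B ∈ T, B.2.1 = d)
    (h1 : ∀ B ∈ T, (4 : ℝ) ^ (B.1 - B.2.2) ≤ 4 * (2 ^ d * H))
    (h2 : ∀ B ∈ T, (2 : ℝ) ^ B.2.2 ≤ 2 * 2 ^ (B.1 - B.2.2) * ε / 2 ^ d) :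
    ∑ B ∈ T, (2 : ℝ) ^ B.1 ≤ 64 / 3 * ε * H := by
  have step : ∀ u ∈ T.image (fun B => B.1 - B.2.2),
      ∑ B ∈ T with B.1 - B.2.2 = u, (2 : ℝ) ^ B.1 ≤ 4 * ε / 2 ^ d * 4 ^ u := by
    intro u _
    have e : ∑ B ∈ T with B.1 - B.2.2 = u, (2 : ℝ) ^ B.1 =
        2 ^ u * ∑ B ∈ T with B.1 - B.2.2 = u, (2 : ℝ) ^ B.2.2 := by
      rw [Finset.mul_sum]
      apply Finset.sum_congr rfl
      intro B hB
      rw [← (Finset.mem_filter.1 hB).2, ← zpow_add₀ (by norm_num)]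
      congr 1
      ring
    have g := geo_sum_le' (b := 2) (by norm_num) {B ∈ T | B.1 - B.2.2 = u} (fun B => B.2.2)
      (by
        rintro ⟨a, d', s⟩ hB ⟨a', d'', s'⟩ hB' h
        simp only [Finset.coe_filter, Set.mem_ofPred_eq] at hB hB' h
        have e1 := hd _ hB.1
        have e2 := hd _ hB'.1
        simp only at e1 e2
        subst h e1 e2
        simp; omega)
      (2 * 2 ^ u * ε / 2 ^ d) (by positivity)
      (fun B hB => by
        have := Finset.mem_filter.1 hB
        simpa only [this.2] using h2 B this.1)
    rw [e]
    calc _ ≤ (2 : ℝ) ^ u * (2 / (2 - 1) * (2 * 2 ^ u * ε / 2 ^ d)) := by gcongr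
      _ = 4 * ε / 2 ^ d * (2 ^ u * 2 ^ u) := by ring
      _ = _ := by rw [← mul_zpow]; norm_num
  rw [← Finset.sum_fiberwise_of_maps_to (t := T.image (fun B => B.1 - B.2.2))
    (g := fun B => B.1 - B.2.2) (fun x hx => Finset.mem_image_of_mem _ hx)]
  refine (Finset.sum_le_sum step).trans ?_
  rw [← Finset.mul_sum]
  have g := geo_sum_le (b := 4) (by norm_num) (T.image (fun B => B.1 - B.2.2))
    (4 * (2 ^ d * H)) (by positivity) (fun n hn => by
      obtain ⟨B, hB, rfl⟩ := Finset.mem_image.1 hn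
      exact h1 B hB)
  calc _ ≤ 4 * ε / 2 ^ d * (4 / (4 - 1) * (4 * (2 ^ d * H))) := by gcongr
    _ = _ := by field_simp; ring

/-! ### Contributions of a single job -/

namespace AlgA

variable (A : AlgA)

/-- `α_j⁺` in the execution `A`. -/
abbrev aP (j : ℕ) : ℝ := alphaPlus A.J A.r A.p A.w A.sched A.Jimm j

/-- `α_j⁻` in the execution `A`. -/
abbrev aM (j : ℕ) : ℝ := alphaMinus A.J A.r A.p A.w A.sched A.Jimm j

/-- `α_j` in the execution `A`. -/
abbrev al (j : ℕ) : ℝ := alpha A.J A.r A.p A.w A.sched A.Jimm j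

/-- The density class of `j` in the execution `A`. -/
abbrev cl (j : ℕ) : ℤ := cls A.p A.w j

/-- The jobs active when `j` arrives. -/
abbrev arr (j : ℕ) : Finset ℕ := arrSet A.J A.r A.p A.sched A.Jimm j

/-- The remaining weight of `j` at time `t`. -/
abbrev wr (j t : ℕ) : ℝ := wrem A.p A.w A.sched j t

/-- `w_j p_j + α_j⁺`, the amount to which the pending weight of the class of `j` is charged. -/
def charge (j : ℕ) : ℝ := A.w j * A.p j + A.aP j

/-- The total charge available in density class `i`. -/
def classCharge (i : ℤ) : ℝ := ∑ j ∈ A.J with A.cl j = i, A.charge j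

variable {A}

lemma p_pos {j : ℕ} (hj : j ∈ A.J) : (0 : ℝ) < A.p j := by exact_mod_cast A.hp j hj

lemma den_pos {j : ℕ} (hj : j ∈ A.J) : 0 < den A.p A.w j := div_pos (A.hw j hj) (p_pos hj)

lemma den_mul {j : ℕ} (hj : j ∈ A.J) : den A.p A.w j * A.p j = A.w j :=
  div_mul_cancel₀ _ (p_pos hj).ne'

lemma log_le {x : ℝ} (hx : 0 < x) : (2 : ℝ) ^ Int.log 2 x ≤ x := by
  simpa using Int.zpow_log_le_self (b := 2) (by norm_num) hx

lemma le_log (x : ℝ) : x ≤ 2 * (2 : ℝ) ^ Int.log 2 x := by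
  have := Int.lt_zpow_succ_log_self (b := 2) (by norm_num) x
  rw [zpow_add_one₀ (by norm_num)] at this
  push_cast at this
  linarith

lemma k_pos : 0 < A.k := by
  have h := A.hk
  have : (0 : ℝ) < A.k := by rw [h]; exact one_div_pos.2 A.hε
  exact_mod_cast this

lemma arr_sub (j : ℕ) : A.arr j ⊆ A.J := Finset.filter_subset _ _

lemma wr_nonneg {j : ℕ} (hj : j ∈ A.J) (t : ℕ) : 0 ≤ A.wr j t :=
  mul_nonneg (den_pos hj).le (Nat.cast_nonneg _)

lemma rem_anti {p : ℕ → ℕ} {sched : ℕ → Option ℕ} {j t t' : ℕ} (h : t ≤ t') :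
    rem p sched j t' ≤ rem p sched j t := by
  unfold rem
  have : #{x ∈ Finset.range t | sched x = some j} ≤ #{x ∈ Finset.range t' | sched x = some j} :=
    Finset.card_le_card (Finset.filter_subset_filter _ (Finset.range_mono h))
  omega

lemma wr_anti {j t t' : ℕ} (hj : j ∈ A.J) (h : t ≤ t') : A.wr j t' ≤ A.wr j t := by
  have : (rem A.p A.sched j t' : ℝ) ≤ rem A.p A.sched j t := by exact_mod_cast rem_anti h
  exact mul_le_mul_of_nonneg_left this (den_pos hj).le

lemma wr_le {j : ℕ} (hj : j ∈ A.J) (t : ℕ) : A.wr j t ≤ A.w j := by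
  rw [← den_mul hj]
  have : (rem A.p A.sched j t : ℝ) ≤ A.p j := by exact_mod_cast Nat.sub_le _ _
  exact mul_le_mul_of_nonneg_left this (den_pos hj).le

lemma aP_nonneg {j : ℕ} (hj : j ∈ A.J) : 0 ≤ A.aP j := by
  have hw := A.hw j hj
  have h : ∀ j' ∈ A.arr j, 0 ≤ A.wr j' (A.r j) := fun j' hj' => wr_nonneg (arr_sub j hj') _
  refine add_nonneg (mul_nonneg hw.le (Finset.sum_nonneg fun _ _ => Nat.cast_nonneg _))
    (mul_nonneg (Nat.cast_nonneg _) (Finset.sum_nonneg fun j' hj' => h j' ?_))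
  exact Finset.mem_of_mem_filter _ hj'

lemma aP_le_al {j : ℕ} (hj : j ∈ A.J) : A.aP j ≤ A.al j := by
  have hw := A.hw j hj
  have hp := p_pos hj
  have h : ∀ j' ∈ A.arr j, 0 ≤ A.wr j' (A.r j) := fun j' hj' => wr_nonneg (arr_sub j hj') _
  have s1 := Finset.sum_le_sum_of_subset_of_nonneg
    (f := fun j' => (rem A.p A.sched j' (A.r j) : ℝ))
    (Finset.monotone_filter_right (A.arr j)
      (p := fun j' => A.cl j ≤ A.cl j' ∧ den A.p A.w j ≤ den A.p A.w j')
      (q := fun j' => den A.p A.w j ≤ den A.p A.w j') (fun _ _ hh => hh.2))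
    (fun i _ _ => Nat.cast_nonneg _)
  have s2 := Finset.sum_le_sum_of_subset_of_nonneg
    (f := fun j' => A.wr j' (A.r j))
    (Finset.monotone_filter_right (A.arr j)
      (p := fun j' => A.cl j ≤ A.cl j' ∧ den A.p A.w j' < den A.p A.w j)
      (q := fun j' => den A.p A.w j' < den A.p A.w j) (fun _ _ hh => hh.2))
    (fun i hi _ => h i (Finset.mem_of_mem_filter _ hi))
  have s3 : 0 ≤ A.w j * A.p j / 2 := by positivity
  have s4 := mul_le_mul_of_nonneg_left s1 hw.le
  have s5 := mul_le_mul_of_nonneg_left s2 hp.le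
  simp only [aP, al, alphaPlus, alpha]
  linarith

lemma den_lt_of_cl_lt {j j' : ℕ} (hj : j ∈ A.J) (h : A.cl j' < A.cl j) :
    den A.p A.w j' < den A.p A.w j := by
  by_contra hh
  exact absurd (Int.log_mono_right (b := 2) (den_pos hj) (not_lt.1 hh)) (not_le.2 h)

lemma aM_le_al {j : ℕ} (hj : j ∈ A.J) : A.aM j ≤ A.al j := by
  have hw := A.hw j hj
  have hp := p_pos hj
  have s2 := Finset.sum_le_sum_of_subset_of_nonneg
    (f := fun j' => A.wr j' (A.r j))
    (Finset.monotone_filter_right (A.arr j)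
      (p := fun j' => A.cl j' < A.cl j)
      (q := fun j' => den A.p A.w j' < den A.p A.w j) (fun _ _ hh => den_lt_of_cl_lt hj hh))
    (fun i hi _ => wr_nonneg (arr_sub j (Finset.mem_of_mem_filter _ hi)) _)
  have s1 : 0 ≤ ∑ j' ∈ A.arr j with den A.p A.w j ≤ den A.p A.w j',
      (rem A.p A.sched j' (A.r j) : ℝ) := Finset.sum_nonneg fun _ _ => Nat.cast_nonneg _
  have s3 : 0 ≤ A.w j * A.p j / 2 := by positivity
  have s4 := mul_nonneg hw.le s1
  have s5 := mul_le_mul_of_nonneg_left s2 hp.le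
  simp only [aM, al, alphaMinus, alpha]
  linarith

lemma al_nonneg {j : ℕ} (hj : j ∈ A.J) : 0 ≤ A.al j := (aP_nonneg hj).trans (aP_le_al hj)

lemma charge_nonneg {j : ℕ} (hj : j ∈ A.J) : 0 ≤ A.charge j :=
  add_nonneg (mul_nonneg (A.hw j hj).le (p_pos hj).le) (aP_nonneg hj)

lemma classCharge_nonneg (i : ℤ) : 0 ≤ A.classCharge i :=
  Finset.sum_nonneg fun _ hj => charge_nonneg (Finset.mem_of_mem_filter _ hj)

lemma den_le_two_zpow (j : ℕ) : den A.p A.w j ≤ 2 * 2 ^ A.cl j := le_log _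

/-! ### Pending weight of a density class -/

/-- The weight of the class of `j` pending at its arrival, times `w_j`, is controlled by `α_j⁺`. -/
lemma w_mul_class_le {j : ℕ} (hj : j ∈ A.J) :
    A.w j * ∑ j' ∈ A.arr j with A.cl j' = A.cl j, A.wr j' (A.r j) ≤ 2 * 2 ^ A.cl j * A.aP j := by
  have hw := A.hw j hj
  have hp := p_pos hj
  have hz : (0 : ℝ) < 2 * 2 ^ A.cl j := by positivity
  have h1 : A.w j * ∑ j' ∈ A.arr j with A.cl j' = A.cl j ∧ den A.p A.w j ≤ den A.p A.w j',
      A.wr j' (A.r j) ≤ 2 * 2 ^ A.cl j * (A.w j *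
        ∑ j' ∈ A.arr j with A.cl j ≤ A.cl j' ∧ den A.p A.w j ≤ den A.p A.w j',
          (rem A.p A.sched j' (A.r j) : ℝ)) := by
    rw [mul_left_comm]
    apply mul_le_mul_of_nonneg_left _ hw.le
    rw [Finset.mul_sum]
    refine le_trans (Finset.sum_le_sum fun j' hj' => ?_)
      (Finset.sum_le_sum_of_subset_of_nonneg
        (Finset.monotone_filter_right _ fun _ _ hh => ⟨hh.1.ge, hh.2⟩)
        (fun _ _ _ => mul_nonneg hz.le (Nat.cast_nonneg _)))
    rw [Finset.mem_filter] at hj'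
    have := den_le_two_zpow (A := A) j'
    rw [hj'.2.1] at this
    exact mul_le_mul_of_nonneg_right this (Nat.cast_nonneg _)
  have h2 : A.w j * ∑ j' ∈ A.arr j with A.cl j' = A.cl j ∧ ¬ den A.p A.w j ≤ den A.p A.w j',
      A.wr j' (A.r j) ≤ 2 * 2 ^ A.cl j * (A.p j *
        ∑ j' ∈ A.arr j with A.cl j ≤ A.cl j' ∧ den A.p A.w j' < den A.p A.w j,
          A.wr j' (A.r j)) := by
    rw [← mul_assoc]
    have e : A.w j ≤ 2 * 2 ^ A.cl j * A.p j := by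
      rw [← den_mul hj]
      exact mul_le_mul_of_nonneg_right (den_le_two_zpow j) hp.le
    have n : ∀ j' ∈ A.arr j, 0 ≤ A.wr j' (A.r j) := fun j' hj' => wr_nonneg (arr_sub j hj') _
    refine mul_le_mul e (Finset.sum_le_sum_of_subset_of_nonneg
        (Finset.monotone_filter_right _ fun _ _ hh => ⟨hh.1.ge, not_le.1 hh.2⟩)
        (fun i hi _ => n i (Finset.mem_of_mem_filter _ hi)))
        (Finset.sum_nonneg fun i hi => n i (Finset.mem_of_mem_filter _ hi)) (by positivity)
  rw [← Finset.sum_filter_add_sum_filter_not _ (fun j' => den A.p A.w j ≤ den A.p A.w j'),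
    Finset.filter_filter, Finset.filter_filter]
  simp only [aP, alphaPlus]
  rw [mul_add, mul_add]
  exact add_le_add h1 h2

/-- Splitting a square into ordered pairs. -/
lemma sq_sum_le (S : Finset ℕ) (r : ℕ → ℕ) (x : ℕ → ℝ) (hx : ∀ j ∈ S, 0 ≤ x j) :
    (∑ j ∈ S, x j) ^ 2 ≤ 2 * ∑ j ∈ S, x j * ∑ j' ∈ S with arrLE r j' j, x j' := by
  have e1 : ∑ j ∈ S, x j * ∑ j' ∈ S with arrLE r j' j, x j' =
      ∑ j ∈ S, ∑ j' ∈ S, if arrLE r j' j then x j * x j' else 0 := by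
    apply Finset.sum_congr rfl
    intro j _
    rw [Finset.mul_sum, Finset.sum_filter]
  have e2 : ∑ j ∈ S, x j * ∑ j' ∈ S with arrLE r j' j, x j' =
      ∑ j ∈ S, ∑ j' ∈ S, if arrLE r j j' then x j * x j' else 0 := by
    rw [e1, Finset.sum_comm]
    simp only [mul_comm]
  rw [two_mul]
  nth_rewrite 1 [e1]
  rw [e2, ← Finset.sum_add_distrib, sq, Finset.sum_mul_sum]
  apply Finset.sum_le_sum
  intro j hj
  rw [← Finset.sum_add_distrib]
  apply Finset.sum_le_sum
  intro j' hj'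
  have h0 := mul_nonneg (hx j hj) (hx j' hj')
  have ht : arrLE r j' j ∨ arrLE r j j' := by unfold arrLE; omega
  split_ifs <;> first | linarith | tauto

/-- The weight of class `i` pending at any arrival is at most `2 √(2 ^ i F_i)`, where `F_i` is the
total charge of the class: pairs of pending jobs are charged to the later of the two, at whose
arrival the earlier one had at least as much remaining weight. -/
lemma class_weight_sq (j : ℕ) (i : ℤ) :
    (∑ j' ∈ A.arr j with A.cl j' = i, A.wr j' (A.r j)) ^ 2 ≤ 4 * 2 ^ i * A.classCharge i := by
  set S := {j' ∈ A.arr j | A.cl j' = i} with hS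
  have hSJ : ∀ a ∈ S, a ∈ A.J := fun a ha => arr_sub j (Finset.mem_of_mem_filter _ ha)
  refine (sq_sum_le S A.r _ fun a ha => wr_nonneg (hSJ a ha) _).trans ?_
  have main : ∀ a ∈ S, A.wr a (A.r j) * ∑ b ∈ S with arrLE A.r b a, A.wr b (A.r j) ≤
      2 * 2 ^ i * A.charge a := by
    intro a ha
    have haJ := hSJ a ha
    have hw := A.hw a haJ
    have hacl : A.cl a = i := (Finset.mem_filter.1 ha).2
    have hra : A.r a ≤ A.r j := by
      have := (Finset.mem_filter.1 (Finset.mem_filter.1 ha).1).2.1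
      omega
    have inner : ∑ b ∈ S with arrLE A.r b a, A.wr b (A.r j) ≤
        A.w a + ∑ b ∈ A.arr a with A.cl b = A.cl a, A.wr b (A.r a) := by
      have hsub : {b ∈ S | arrLE A.r b a} ⊆ insert a {b ∈ A.arr a | A.cl b = A.cl a} := by
        intro b hb
        obtain ⟨hbS, hba⟩ := Finset.mem_filter.1 hb
        rw [Finset.mem_insert]
        by_cases hab : b = a
        · exact Or.inl hab
        right
        obtain ⟨hb1, hb2⟩ := Finset.mem_filter.1 hbS
        obtain ⟨hbJ, -, hb3, hb4⟩ := Finset.mem_filter.1 hb1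
        refine Finset.mem_filter.2 ⟨Finset.mem_filter.2 ⟨hbJ, ?_, hb3, ?_⟩, hb2.trans hacl.symm⟩
        · unfold arrLE at hba; omega
        · exact hb4.trans_le (rem_anti hra)
      have hna : a ∉ {b ∈ A.arr a | A.cl b = A.cl a} := by
        intro h
        have := (Finset.mem_filter.1 (Finset.mem_filter.1 h).1).2.1
        omega
      calc _ ≤ ∑ b ∈ S with arrLE A.r b a, A.wr b (A.r a) :=
            Finset.sum_le_sum fun b hb => wr_anti (hSJ b (Finset.mem_of_mem_filter _ hb)) hra
        _ ≤ ∑ b ∈ insert a {b ∈ A.arr a | A.cl b = A.cl a}, A.wr b (A.r a) := by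
            apply Finset.sum_le_sum_of_subset_of_nonneg hsub
            intro b hb _
            rcases Finset.mem_insert.1 hb with rfl | hb
            · exact wr_nonneg haJ _
            · exact wr_nonneg (arr_sub a (Finset.mem_of_mem_filter _ hb)) _
        _ ≤ _ := by
            rw [Finset.sum_insert hna]
            have := wr_le haJ (A.r a)
            linarith
    have hww : A.w a * A.w a ≤ 2 * 2 ^ i * (A.w a * A.p a) := by
      have := den_le_two_zpow (A := A) a
      rw [hacl] at this
      calc A.w a * A.w a = A.w a * (den A.p A.w a * A.p a) := by rw [den_mul haJ]
        _ ≤ A.w a * (2 * 2 ^ i * A.p a) := by gcongr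
        _ = _ := by ring
    have hcl := w_mul_class_le haJ
    rw [show (2 : ℝ) ^ A.cl a = 2 ^ i by rw [hacl]] at hcl
    calc _ ≤ A.w a * (A.w a + ∑ b ∈ A.arr a with A.cl b = A.cl a, A.wr b (A.r a)) := by
          apply mul_le_mul (wr_le haJ _) inner _ hw.le
          exact Finset.sum_nonneg fun b hb => wr_nonneg (hSJ b (Finset.mem_of_mem_filter _ hb)) _
      _ ≤ _ := by
          rw [mul_add, charge, mul_add]
          exact add_le_add hww hcl
  have := Finset.sum_le_sum main
  rw [← Finset.mul_sum] at this
  have hsub : ∑ a ∈ S, A.charge a ≤ A.classCharge i := by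
    apply Finset.sum_le_sum_of_subset_of_nonneg
    · intro a ha
      exact Finset.mem_filter.2 ⟨hSJ a ha, (Finset.mem_filter.1 ha).2⟩
    · intro a ha _
      exact charge_nonneg (Finset.mem_of_mem_filter _ ha)
  have h2 : (0 : ℝ) < 2 ^ i := by positivity
  nlinarith

variable (A) in
/-- The bound for `2 ^ (-d)` times the square of the weight pending in the classes below `d`. -/
def lowCharge (d : ℤ) : ℝ :=
  12 * ∑ i ∈ A.J.image A.cl with i < d, A.classCharge i * (3 / 2 : ℝ) ^ (i - d)

lemma lowCharge_nonneg (d : ℤ) : 0 ≤ A.lowCharge d :=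
  mul_nonneg (by norm_num) (Finset.sum_nonneg fun i _ =>
    mul_nonneg (classCharge_nonneg i) (by positivity))

lemma low_weight_sq (j : ℕ) (d : ℤ) :
    (∑ j' ∈ A.arr j with A.cl j' < d, A.wr j' (A.r j)) ^ 2 ≤ 2 ^ d * A.lowCharge d := by
  rw [← Finset.sum_fiberwise_of_maps_to (t := {i ∈ A.J.image A.cl | i < d}) (g := A.cl)
    (fun x hx => by
      rw [Finset.mem_filter] at hx ⊢
      exact ⟨Finset.mem_image_of_mem _ (arr_sub j hx.1), hx.2⟩)]
  apply hardy_point _ _ _ _ (fun i hi => (Finset.mem_filter.1 hi).2)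
  intro i hi
  have : {x ∈ {j' ∈ A.arr j | A.cl j' < d} | A.cl x = i} = {j' ∈ A.arr j | A.cl j' = i} := by
    rw [Finset.filter_filter]
    apply Finset.filter_congr
    intro x _
    have := (Finset.mem_filter.1 hi).2
    constructor
    · exact fun h => h.2
    · exact fun h => ⟨h ▸ this, h⟩
  rw [this]
  exact class_weight_sq j i

lemma sum_lowCharge (D : Finset ℤ) : ∑ d ∈ D, A.lowCharge d ≤ 24 * ∑ j ∈ A.J, A.charge j := by
  refine (hardy_sum D (A.J.image A.cl) A.classCharge classCharge_nonneg).trans (le_of_eq ?_)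
  congr 1
  exact Finset.sum_fiberwise_of_maps_to (fun x hx => Finset.mem_image_of_mem _ hx) _

/-! ### The two tables -/

variable (A) in
/-- `1/ε` times the sum of `w_j p_j` over the jobs kept out of a table bounds their values. -/
lemma sum_split (f : ℕ → ℝ) (P : ℕ → Prop) (h : ∀ j ∈ A.J, ¬ P j → f j ≤ A.w j * A.p j / A.ε) :
    ∑ j ∈ A.J, f j ≤ A.k * ∑ j ∈ A.J, A.w j * A.p j + ∑ j ∈ A.J with P j, f j := by
  rw [← Finset.sum_filter_add_sum_filter_not _ P f, add_comm]
  gcongr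
  calc _ ≤ ∑ j ∈ A.J with ¬ P j, A.w j * A.p j / A.ε :=
        Finset.sum_le_sum fun j hj => h j (Finset.mem_filter.1 hj).1 (Finset.mem_filter.1 hj).2
    _ ≤ ∑ j ∈ A.J, A.w j * A.p j / A.ε :=
        Finset.sum_le_sum_of_subset_of_nonneg (Finset.filter_subset _ _) fun j hj _ =>
          div_nonneg (mul_nonneg (A.hw j hj).le (p_pos hj).le) A.hε.le
    _ = _ := by rw [A.hk, ← Finset.sum_div]; ring

lemma sum_imm_le (R : Finset ℕ) (f : ℕ → ℝ) (hR : R ⊆ A.Jimm) (h : ∀ j ∈ R, f j ≤ A.al j) :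
    ∑ j ∈ R, f j ≤ ∑ j ∈ A.Jimm, A.al j :=
  (Finset.sum_le_sum h).trans (Finset.sum_le_sum_of_subset_of_nonneg hR fun j hj _ =>
    al_nonneg ((A.hJimm j).1 hj).1)

/-- Since the first job of each bucket of `T⁺` is rejected, the rejected jobs pay for all of
`T⁺`. -/
lemma sum_aP_le : ∑ j ∈ A.J, A.aP j ≤
    A.k * (∑ j ∈ A.J, A.w j * A.p j + 4 * ∑ j ∈ A.Jimm, A.al j) := by
  have h1 := A.sum_split A.aP (fun j => A.w j * A.p j / A.ε ≤ A.aP j)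
    (fun j _ h => (not_le.1 h).le)
  set S := Jplus A.J A.r A.p A.w A.sched A.Jimm A.ε with hS
  change _ ≤ _ + ∑ j ∈ S, A.aP j at h1
  have hSJ : ∀ j ∈ S, j ∈ A.J := fun j hj => Finset.mem_of_mem_filter _ hj
  have hpos : ∀ j ∈ S, 0 < A.aP j := fun j hj => by
    refine lt_of_lt_of_le ?_ (Finset.mem_filter.1 hj).2
    exact div_pos (mul_pos (A.hw j (hSJ j hj)) (p_pos (hSJ j hj))) A.hε
  have ht := table_sum_le S (bucketPlus A.J A.r A.p A.w A.sched A.Jimm) A.r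
    (fun n => n % A.k = 1 % A.k) A.aP (fun b => (2 : ℝ) ^ b.1 * 2 ^ b.2) 4 (by norm_num)
    (fun b => by positivity)
    (fun j hj => by
      have hw := A.hw j (hSJ j hj)
      have a1 := log_le (div_pos (hpos j hj) hw)
      have a2 := log_le hw
      calc _ ≤ A.aP j / A.w j * A.w j := by
            apply mul_le_mul a1 a2 (by positivity) (div_pos (hpos j hj) hw).le
        _ = _ := div_mul_cancel₀ _ hw.ne')
    (fun j hj => by
      have hw := A.hw j (hSJ j hj)
      have a1 := le_log (A.aP j / A.w j)
      have a2 := le_log (A.w j)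
      calc A.aP j = A.aP j / A.w j * A.w j := (div_mul_cancel₀ _ hw.ne').symm
        _ ≤ (2 * 2 ^ Int.log 2 (A.aP j / A.w j)) * (2 * 2 ^ Int.log 2 (A.w j)) := by
            apply mul_le_mul a1 a2 hw.le (by positivity)
        _ = _ := by simp only [bucketPlus]; ring)
    A.k 0 (fun m => count_one A.k m k_pos)
  have hi := sum_imm_le (A := A) (f := A.aP) (R := {j ∈ S | #{j' ∈ S |
      bucketPlus A.J A.r A.p A.w A.sched A.Jimm j' = bucketPlus A.J A.r A.p A.w A.sched A.Jimm j ∧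
        arrLE A.r j' j} % A.k = 1 % A.k})
    (fun j hj => by
      rw [Finset.mem_filter] at hj
      exact (A.hJimm j).2 ⟨hSJ j hj.1, Or.inl hj⟩)
    (fun j hj => aP_le_al (hSJ j (Finset.mem_of_mem_filter _ hj)))
  have := mul_le_mul_of_nonneg_left hi (show (0 : ℝ) ≤ 4 * A.k by positivity)
  simp only [Nat.cast_zero, zero_mul, add_zero] at ht
  linarith

/-- The buckets of `T⁻`, counted with their value `2 ^ a` once each. -/
lemma sum_buckets_le :
    ∑ B ∈ (Jminus A.J A.r A.p A.w A.sched A.Jimm A.ε).image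
      (bucketMinus A.J A.r A.p A.w A.sched A.Jimm), (2 : ℝ) ^ B.1 ≤
      512 * A.ε * ∑ j ∈ A.J, A.charge j := by
  set S := Jminus A.J A.r A.p A.w A.sched A.Jimm A.ε with hS
  set T := S.image (bucketMinus A.J A.r A.p A.w A.sched A.Jimm) with hT
  rw [← Finset.sum_fiberwise_of_maps_to (t := T.image (fun B => B.2.1)) (g := fun B => B.2.1)
    (fun x hx => Finset.mem_image_of_mem _ hx)]
  have main : ∀ d ∈ T.image (fun B => B.2.1), ∑ B ∈ T with B.2.1 = d, (2 : ℝ) ^ B.1 ≤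
      64 / 3 * A.ε * A.lowCharge d := by
    intro d _
    have facts : ∀ B ∈ {B ∈ T | B.2.1 = d},
        (4 : ℝ) ^ (B.1 - B.2.2) ≤ 4 * (2 ^ d * A.lowCharge d) ∧
        (2 : ℝ) ^ B.2.2 ≤ 2 * 2 ^ (B.1 - B.2.2) * A.ε / 2 ^ d := by
      intro B hB
      obtain ⟨hBT, hBd⟩ := Finset.mem_filter.1 hB
      obtain ⟨j, hj, rfl⟩ := Finset.mem_image.1 hBT
      obtain ⟨hjJ, hjm⟩ := Finset.mem_filter.1 hj
      have hw := A.hw j hjJ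
      have hp := p_pos hjJ
      have hε := A.hε
      have hden := den_pos hjJ
      simp only [bucketMinus] at hBd ⊢
      set a := Int.log 2 (alphaMinus A.J A.r A.p A.w A.sched A.Jimm j)
      set s := Int.log 2 ((A.p j : ℝ))
      have hα : 0 < A.aM j := lt_trans (by positivity) hjm
      have a1 : (2 : ℝ) ^ a ≤ A.aM j := log_le hα
      have a2 : A.aM j ≤ 2 * 2 ^ a := le_log _
      have s1 : (2 : ℝ) ^ s ≤ A.p j := log_le hp
      have s2 : A.p j ≤ 2 * (2 : ℝ) ^ s := le_log _
      have d1 : (2 : ℝ) ^ d ≤ den A.p A.w j := hBd ▸ log_le (den_pos hjJ)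
      have hX := low_weight_sq (A := A) j d
      set X := ∑ j' ∈ A.arr j with A.cl j' < d, A.wr j' (A.r j) with hXdef
      have hX0 : 0 ≤ X := Finset.sum_nonneg fun b hb =>
        wr_nonneg (arr_sub j (Finset.mem_of_mem_filter _ hb)) _
      have hαX : A.aM j = A.p j * X := by
        simp only [aM, alphaMinus, hXdef, ← hBd]
      have hs0 : (0 : ℝ) < 2 ^ s := by positivity
      have hd0 : (0 : ℝ) < 2 ^ d := by positivity
      have hsplit : (2 : ℝ) ^ (a - s) = 2 ^ a / 2 ^ s := zpow_sub₀ (by norm_num) _ _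
      constructor
      · have hu : (2 : ℝ) ^ (a - s) ≤ 2 * X := by
          rw [hsplit, div_le_iff₀ hs0]
          nlinarith
        have e4 : (4 : ℝ) ^ (a - s) = (2 ^ (a - s)) ^ 2 := by
          rw [sq, ← mul_zpow]; norm_num
        rw [e4]
        have : ((2 : ℝ) ^ (a - s)) ^ 2 ≤ (2 * X) ^ 2 := by gcongr
        nlinarith
      · -- the defining inequality of `J⁻` reads `ρ_j p_j² < ε α_j⁻`
        have hd2 : den A.p A.w j * A.p j * A.p j < A.ε * A.aM j := by
          rw [den_mul hjJ]
          have := (div_lt_iff₀ hε).1 hjm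
          linarith
        have : (2 : ℝ) ^ d * 2 ^ s * 2 ^ s ≤ A.ε * (2 * 2 ^ a) := by
          calc (2 : ℝ) ^ d * 2 ^ s * 2 ^ s ≤ den A.p A.w j * A.p j * A.p j := by gcongr
            _ ≤ A.ε * A.aM j := hd2.le
            _ ≤ _ := by gcongr
        rw [hsplit, le_div_iff₀ hd0]
        rw [show 2 * ((2 : ℝ) ^ a / 2 ^ s) * A.ε = A.ε * (2 * 2 ^ a) / 2 ^ s by ring,
          le_div_iff₀ hs0]
        linarith
    exact triple_sum_fixed _ d A.ε _ A.hε (lowCharge_nonneg d)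
      (fun B hB => (Finset.mem_filter.1 hB).2) (fun B hB => (facts B hB).1)
      (fun B hB => (facts B hB).2)
  refine (Finset.sum_le_sum main).trans ?_
  rw [← Finset.mul_sum]
  have h := sum_lowCharge (A := A) (T.image (fun B => B.2.1))
  have := mul_le_mul_of_nonneg_left h (show 0 ≤ 64 / 3 * A.ε by have := A.hε; positivity)
  linarith

/-- In `T⁻` the rejected jobs pay for all but at most one block of `1/ε` jobs per bucket. -/
lemma sum_aM_le : ∑ j ∈ A.J, A.aM j ≤
    A.k * (∑ j ∈ A.J, A.w j * A.p j + 2 * ∑ j ∈ A.Jimm, A.al j +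
      2 * (512 * A.ε * ∑ j ∈ A.J, A.charge j)) := by
  have h1 := A.sum_split A.aM (fun j => A.w j * A.p j / A.ε < A.aM j)
    (fun j _ h => not_lt.1 h)
  set S := Jminus A.J A.r A.p A.w A.sched A.Jimm A.ε with hS
  change _ ≤ _ + ∑ j ∈ S, A.aM j at h1
  have hSJ : ∀ j ∈ S, j ∈ A.J := fun j hj => Finset.mem_of_mem_filter _ hj
  have hpos : ∀ j ∈ S, 0 < A.aM j := fun j hj => by
    refine lt_trans ?_ (Finset.mem_filter.1 hj).2
    exact div_pos (mul_pos (A.hw j (hSJ j hj)) (p_pos (hSJ j hj))) A.hε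
  have ht := table_sum_le S (bucketMinus A.J A.r A.p A.w A.sched A.Jimm) A.r
    (fun n => n % A.k = 0) A.aM (fun b => (2 : ℝ) ^ b.1) 2 (by norm_num)
    (fun b => by positivity) (fun j hj => log_le (hpos j hj)) (fun j hj => le_log _)
    A.k 1 (fun m => count_zero A.k m k_pos)
  have hi := sum_imm_le (A := A) (f := A.aM) (R := {j ∈ S | #{j' ∈ S |
      bucketMinus A.J A.r A.p A.w A.sched A.Jimm j' =
        bucketMinus A.J A.r A.p A.w A.sched A.Jimm j ∧ arrLE A.r j' j} % A.k = 0})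
    (fun j hj => by
      rw [Finset.mem_filter] at hj
      exact (A.hJimm j).2 ⟨hSJ j hj.1, Or.inr hj⟩)
    (fun j hj => aM_le_al (hSJ j (Finset.mem_of_mem_filter _ hj)))
  have hb := sum_buckets_le (A := A)
  have := mul_le_mul_of_nonneg_left (add_le_add hi hb) (show (0 : ℝ) ≤ 2 * A.k by positivity)
  simp only [Nat.cast_one, one_mul] at ht
  linarith

end AlgA

/-- `∑_{j∈J} α_j⁻ ≤ (c/ε)·(∑_{j∈J} w_j·p_j + ∑_{j∈J^imm} α_j)`
for an absolute constant `c`. -/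
theorem alphaMinus_sum_le :
    ∃ c : ℝ, 0 < c ∧ ∀ A : AlgA,
      ∑ j ∈ A.J, alphaMinus A.J A.r A.p A.w A.sched A.Jimm j ≤
        (c / A.ε) * ((∑ j ∈ A.J, A.w j * A.p j) +
          ∑ j ∈ A.Jimm, alpha A.J A.r A.p A.w A.sched A.Jimm j) := by
  refine ⟨5000, by norm_num, fun A => ?_⟩
  have hε := A.hε
  have hε1 : A.ε ≤ 1 := by nlinarith [A.hε2]
  have hP : 0 ≤ ∑ j ∈ A.J, A.w j * A.p j :=
    Finset.sum_nonneg fun j hj => mul_nonneg (A.hw j hj).le (AlgA.p_pos hj).le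
  have hQ : 0 ≤ ∑ j ∈ A.Jimm, A.al j :=
    Finset.sum_nonneg fun j hj => AlgA.al_nonneg ((A.hJimm j).1 hj).1
  have h1 := AlgA.sum_aP_le (A := A)
  have h2 := AlgA.sum_aM_le (A := A)
  simp only [AlgA.charge, Finset.sum_add_distrib] at h2
  have hk0 : (0 : ℝ) < A.k := by exact_mod_cast AlgA.k_pos
  have hεk : A.ε * A.k = 1 := by rw [A.hk]; field_simp
  rw [show (5000 : ℝ) / A.ε = A.k * 5000 by rw [A.hk]; ring, mul_assoc]
  refine h2.trans (mul_le_mul_of_nonneg_left ?_ hk0.le)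
  set P := ∑ j ∈ A.J, A.w j * A.p j
  set Q := ∑ j ∈ A.Jimm, A.al j
  set R := ∑ j ∈ A.J, A.aP j
  -- the factor `ε` gained on the buckets of `T⁻` cancels the `1/ε` lost in `T⁺`
  have h3 : A.ε * R ≤ P + 4 * Q := by
    calc A.ε * R ≤ A.ε * (A.k * (P + 4 * Q)) := by gcongr
      _ = _ := by rw [← mul_assoc, hεk, one_mul]
  have h4 : A.ε * P ≤ P := mul_le_of_le_one_left hP hε1
  change _ ≤ 5000 * (P + Q)
  nlinarith
end NPSched
end
end
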